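/- arXiv:1701.00026 — 3 statements merged into one kernel-verified Lean document; each statement's English description precedes it below -/
import Mathlib

section
/- Let R be a ring and M a right R-module. The following are equivalent: (1) M is an almost V-module; (2) every module in σ(M) is either a V-module or contains a nonzero direct summand which is a projective object in the category σ(M); (3) there exists an independent family {A_i}_{i∈I} of local submodules of M such that: (a) each A_i is both M-injective and M-projective of composition length two; (b) J(M) = ⊕_{i∈I} J(A_i); (c) M/J(M) is a V-module. -/
universe u v w

section Defs

variable (A : Type u) [Ring A]

/-- The radical of a module: the intersection of all maximal submodules
(`⊤` if there are none). -/
def modRad (M : Type w) [AddCommGroup M] [Module A M] : Submodule A M :=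
  sInf {P : Submodule A M | IsCoatom P}

/-- The socle of a module: the sum of all simple submodules. -/
def modSocle (M : Type w) [AddCommGroup M] [Module A M] : Submodule A M :=
  sSup {S : Submodule A M | IsAtom S}

/-- A submodule `N` of `M` is small if `N ⊔ K = ⊤` implies `K = ⊤`. -/
def IsSmallSubmodule {M : Type w} [AddCommGroup M] [Module A M] (N : Submodule A M) : Prop :=
  ∀ K : Submodule A M, N ⊔ K = ⊤ → K = ⊤

/-- `N` is a direct summand of `M`. -/
def IsDirectSummand {M : Type w} [AddCommGroup M] [Module A M] (N : Submodule A M) : Prop :=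
  ∃ N' : Submodule A M, IsCompl N N'

/-- `N` is an essential submodule of `M`. -/
def IsEssentialSubmodule {M : Type w} [AddCommGroup M] [Module A M] (N : Submodule A M) : Prop :=
  ∀ K : Submodule A M, K ≠ ⊥ → N ⊓ K ≠ ⊥

/-- An `I₀`-module: every non-small submodule contains a nonzero direct summand. -/
def IsI0Module (M : Type w) [AddCommGroup M] [Module A M] : Prop :=
  ∀ N : Submodule A M, ¬ IsSmallSubmodule A N →
    ∃ D : Submodule A M, D ≠ ⊥ ∧ D ≤ N ∧ IsDirectSummand A D

/-- A `V`-module: every proper submodule is an intersection of maximal submodules. -/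
def IsVModule (M : Type w) [AddCommGroup M] [Module A M] : Prop :=
  ∀ N : Submodule A M, N ≠ ⊤ →
    ∃ S : Set (Submodule A M), (∀ P ∈ S, IsCoatom P) ∧ N = sInf S

/-- A local module: it has a proper submodule containing every proper submodule. -/
def IsLocalModule (M : Type w) [AddCommGroup M] [Module A M] : Prop :=
  ∃ P : Submodule A M, P ≠ ⊤ ∧ ∀ K : Submodule A M, K ≠ ⊤ → K ≤ P

/-- A module of composition length two: it has a submodule which is simultaneously an atom
and a coatom of its submodule lattice, i.e. a composition series `0 ⋖ S ⋖ M`. -/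
def HasLengthTwo (M : Type w) [AddCommGroup M] [Module A M] : Prop :=
  ∃ S : Submodule A M, IsAtom S ∧ IsCoatom S

/-- A uniform module: nonzero, and any two nonzero submodules intersect nontrivially. -/
def IsUniformModule (M : Type w) [AddCommGroup M] [Module A M] : Prop :=
  Nontrivial M ∧ ∀ K L : Submodule A M, K ≠ ⊥ → L ≠ ⊥ → K ⊓ L ≠ ⊥

/-- A uniserial module: submodules are linearly ordered by inclusion. -/
def IsUniserialModule (M : Type w) [AddCommGroup M] [Module A M] : Prop :=
  ∀ K L : Submodule A M, K ≤ L ∨ L ≤ K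

/-- A semiartinian module: every nonzero quotient has a nonzero socle. -/
def IsSemiartinianModule (M : Type w) [AddCommGroup M] [Module A M] : Prop :=
  ∀ N : Submodule A M, N ≠ ⊤ → modSocle A (M ⧸ N) ≠ ⊥

/-- `U` is `M`-injective: homomorphisms from submodules of `M` to `U` extend to `M`. -/
def RelInjective (M : Type v) (U : Type w) [AddCommGroup M] [Module A M]
    [AddCommGroup U] [Module A U] : Prop :=
  ∀ (K : Submodule A M) (f : K →ₗ[A] U), ∃ g : M →ₗ[A] U, ∀ x : K, g (x : M) = f x

/-- `P` is `M`-projective: homomorphisms from `P` to quotients of `M` lift to `M`. -/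
def RelProjective (M : Type v) (P : Type w) [AddCommGroup M] [Module A M]
    [AddCommGroup P] [Module A P] : Prop :=
  ∀ (K : Submodule A M) (f : P →ₗ[A] M ⧸ K), ∃ h : P →ₗ[A] M, ∀ x : P, K.mkQ (h x) = f x

/-- `M` is almost `N`-projective. -/
def AlmostNProjective (M : Type v) (N : Type w) [AddCommGroup M] [Module A M]
    [AddCommGroup N] [Module A N] : Prop :=
  ∀ (K : Submodule A N) (f : M →ₗ[A] N ⧸ K),
    (∃ h : M →ₗ[A] N, ∀ x : M, K.mkQ (h x) = f x) ∨
    (∃ N' : Submodule A N, N' ≠ ⊥ ∧ IsDirectSummand A N' ∧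
      ∃ h' : N' →ₗ[A] M, ∀ x : N', K.mkQ (x : N) = f (h' x))

/-- `M` is almost projective: almost `N`-projective for every module `N`. -/
def IsAlmostProjective (M : Type w) [AddCommGroup M] [Module A M] : Prop :=
  ∀ (N : Type v) [AddCommGroup N] [Module A N], AlmostNProjective A M N

/-- `M` is almost `N`-injective. -/
def AlmostNInjective (M : Type v) (N : Type w) [AddCommGroup M] [Module A M]
    [AddCommGroup N] [Module A N] : Prop :=
  ∀ (N₀ : Submodule A N) (f : N₀ →ₗ[A] M),
    (∃ g : N →ₗ[A] M, ∀ x : N₀, g (x : N) = f x) ∨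
    (∃ π : Module.End A N, IsIdempotentElem π ∧ π ≠ 0 ∧
      ∃ h : M →ₗ[A] LinearMap.range π, ∀ x : N₀, (↑(h (f x)) : N) = π (x : N))

/-- `M` is almost injective: almost `N`-injective for every module `N`. -/
def IsAlmostInjective (M : Type w) [AddCommGroup M] [Module A M] : Prop :=
  ∀ (N : Type v) [AddCommGroup N] [Module A N], AlmostNInjective A M N

/-- `N` belongs to `σ(M)`: `N` is isomorphic to a submodule of a quotient of a direct sum
of copies of `M`. -/
def InSigma (M : Type v) [AddCommGroup M] [Module A M]
    (N : Type w) [AddCommGroup N] [Module A N] : Prop :=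
  ∃ (ι : Type v) (K : Submodule A (ι →₀ M)) (P : Submodule A ((ι →₀ M) ⧸ K)),
    Nonempty (N ≃ₗ[A] P)

/-- `P` is a projective object of the category `σ(M)`. -/
def ProjInSigma (M : Type v) [AddCommGroup M] [Module A M]
    (P : Type w) [AddCommGroup P] [Module A P] : Prop :=
  InSigma A M P ∧
  ∀ (X Y : Type v) [AddCommGroup X] [Module A X] [AddCommGroup Y] [Module A Y],
    InSigma A M X → InSigma A M Y →
    ∀ (g : X →ₗ[A] Y), Function.Surjective g →
    ∀ f : P →ₗ[A] Y, ∃ h : P →ₗ[A] X, ∀ x : P, g (h x) = f x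

/-- `M` is an almost `V`-module: every simple module is almost `N`-injective
for every `N ∈ σ(M)`. -/
def IsAlmostVModule (M : Type v) [AddCommGroup M] [Module A M] : Prop :=
  ∀ (S : Type v) [AddCommGroup S] [Module A S], IsSimpleModule A S →
    ∀ (N : Type v) [AddCommGroup N] [Module A N], InSigma A M N → AlmostNInjective A S N

end Defs


section Helpers

variable {A : Type u} [Ring A]

/-- `X` is subdirectly irreducible with monolith generated by `s`. -/
def IsMonoAt (A : Type u) [Ring A] {X : Type w} [AddCommGroup X] [Module A X] (s : X) : Prop :=
  s ≠ 0 ∧ ∀ D : Submodule A X, D ≠ ⊥ → s ∈ D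

section basic
variable {X : Type*} [AddCommGroup X] [Module A X]
variable {Y : Type*} [AddCommGroup Y] [Module A Y]
variable {Z : Type*} [AddCommGroup Z] [Module A Z]

lemma IsMonoAt.exists_smul {s : X} (hs : IsMonoAt A s) {x : X} (hx : x ≠ 0) :
    ∃ r : A, r • x = s := by
  have := hs.2 (Submodule.span A {x}) (by simpa using hx)
  exact Submodule.mem_span_singleton.1 this

lemma IsMonoAt.injective {s : X} (hs : IsMonoAt A s) (g : X →ₗ[A] Y) (h : g s ≠ 0) :
    Function.Injective g := by
  rw [← LinearMap.ker_eq_bot]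
  by_contra hk
  exact h (hs.2 _ hk)

lemma IsMonoAt.of_injective {s : X} (hs : IsMonoAt A s) (g : Y →ₗ[A] X)
    (hg : Function.Injective g) {y : Y} (hy : g y = s) : IsMonoAt A y := by
  refine ⟨fun h => hs.1 (by rw [← hy, h, map_zero]), fun D hD => ?_⟩
  have : D.map g ≠ ⊥ := by
    intro h
    apply hD
    rw [eq_bot_iff]
    intro d hd
    have h1 : g d ∈ D.map g := Submodule.mem_map_of_mem hd
    rw [h, Submodule.mem_bot] at h1
    exact hg (by rw [h1, map_zero])
  obtain ⟨d, hd, hde⟩ := hs.2 _ this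
  rw [← hy] at hde
  rwa [← hg hde]

lemma IsMonoAt.exists_of_injective {s : X} (hs : IsMonoAt A s) (g : Y →ₗ[A] X)
    (hg : Function.Injective g) {y : Y} (hy : y ≠ 0) : ∃ t : Y, g t = s ∧ IsMonoAt A t := by
  obtain ⟨r, hr⟩ := hs.exists_smul (x := g y) (by
    intro h; exact hy (hg (by rw [h, map_zero])))
  exact ⟨r • y, by rw [map_smul, hr], hs.of_injective g hg (by rw [map_smul, hr])⟩

lemma simple_of_injective (hY : IsSimpleModule A Y) (g : X →ₗ[A] Y)
    (hg : Function.Injective g) {x : X} (hx : x ≠ 0) : IsSimpleModule A X := by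
  have h1 : LinearMap.range g = ⊤ := by
    rcases eq_bot_or_eq_top (LinearMap.range g) with h | h
    · exfalso
      rw [LinearMap.range_eq_bot] at h
      exact hx (hg (by rw [h]; simp))
    · exact h
  exact IsSimpleModule.congr (LinearEquiv.ofBijective g ⟨hg, LinearMap.range_eq_top.1 h1⟩)

lemma simple_iff_span {s : X} (hs : IsMonoAt A s) (h : ∀ x : X, x ∈ Submodule.span A {s}) :
    IsSimpleModule A X := by
  have : Nontrivial X := ⟨s, 0, hs.1⟩
  rw [isSimpleModule_iff]
  refine { toNontrivial := inferInstance, eq_bot_or_eq_top := fun D => ?_ }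
  by_cases hD : D = ⊥
  · exact Or.inl hD
  · right
    rw [eq_top_iff]
    intro x _
    exact (Submodule.span_singleton_le_iff_mem _ _).2 (hs.2 D hD) (h x)

lemma IsMonoAt.span_simple {s : X} (hs : IsMonoAt A s) :
    IsSimpleModule A (Submodule.span A {s}) := by
  have h1 : IsMonoAt A (⟨s, Submodule.mem_span_singleton_self s⟩ : Submodule.span A {s}) :=
    hs.of_injective (Submodule.subtype _) (Submodule.subtype_injective _) rfl
  refine simple_iff_span h1 ?_
  rintro ⟨x, hx⟩
  obtain ⟨r, rfl⟩ := Submodule.mem_span_singleton.1 hx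
  exact Submodule.mem_span_singleton.2 ⟨r, rfl⟩

lemma factor_surj (g : X →ₗ[A] Y) (hg : Function.Surjective g) (k : X →ₗ[A] Z)
    (h : ∀ x, g x = 0 → k x = 0) : ∃ k' : Y →ₗ[A] Z, ∀ x, k' (g x) = k x := by
  refine ⟨((LinearMap.ker g).liftQ k (fun x hx => h x hx)).comp
    (g.quotKerEquivOfSurjective hg).symm.toLinearMap, fun x => ?_⟩
  have : (g.quotKerEquivOfSurjective hg).symm (g x) = (LinearMap.ker g).mkQ x := by
    rw [LinearEquiv.symm_apply_eq]; rfl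
  simp only [LinearMap.comp_apply, LinearEquiv.coe_coe, this]
  exact Submodule.liftQ_apply _ _ _

lemma exists_mono (B : Submodule A X) {x : X} (hx : x ∉ B) :
    ∃ C : Submodule A X, B ≤ C ∧ x ∉ C ∧ IsMonoAt A (C.mkQ x) := by
  obtain ⟨C, hBC, hC⟩ := zorn_le_nonempty₀ {C : Submodule A X | x ∉ C} (by
    intro c hc hch y hy
    refine ⟨sSup c, ?_, fun z hz => le_sSup hz⟩
    intro hmem
    rw [Submodule.mem_sSup_of_directed ⟨y, hy⟩ hch.directedOn] at hmem
    obtain ⟨D, hD, hxD⟩ := hmem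
    exact hc hD hxD) B hx
  refine ⟨C, hBC, hC.prop, by simpa using hC.prop, fun D hD => ?_⟩
  by_contra hxD
  have h2 := hC.le_of_ge (y := D.comap C.mkQ) hxD (fun y hy => by
    have : C.mkQ y = 0 := by simpa using hy
    simp [this])
  apply hD
  rw [eq_bot_iff]
  intro d hd
  obtain ⟨y, rfl⟩ := C.mkQ_surjective d
  have : y ∈ C := h2 hd
  simpa using this

lemma coatom_of_simple (C : Submodule A X) (h : IsSimpleModule A (X ⧸ C)) : IsCoatom C :=
  isSimpleModule_iff_isCoatom.1 h

lemma exists_not_mem_span {s : X} (hs : IsMonoAt A s) (hns : ¬ IsSimpleModule A X) :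
    ∃ x : X, x ∉ Submodule.span A {s} := by
  by_contra h
  push Not at h
  exact hns (simple_iff_span hs h)

lemma mem_modRad_of_mono {s : X} (hs : IsMonoAt A s) (hns : ¬ IsSimpleModule A X)
    (h : X →ₗ[A] Y) : h s ∈ modRad A Y := by
  rw [modRad, Submodule.mem_sInf]
  intro P hP
  by_contra hh
  have hP' : IsSimpleModule A (Y ⧸ P) := isSimpleModule_iff_isCoatom.2 hP
  exact hns (simple_of_injective hP' (P.mkQ.comp h) (hs.injective _ (by simpa using hh)) hs.1)

end basic

section sigma
variable (M : Type v) [AddCommGroup M] [Module A M]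
variable {N : Type*} [AddCommGroup N] [Module A N]
variable {Q : Type*} [AddCommGroup Q] [Module A Q]
variable {L : Type*} [AddCommGroup L] [Module A L]

variable {M} in
lemma InSigma.out (h : InSigma A M N) : ∃ (ι : Type v) (W : Submodule A (ι →₀ M))
    (g : W →ₗ[A] N), Function.Surjective g := by
  obtain ⟨ι, K, P, ⟨e⟩⟩ := h
  refine ⟨ι, P.comap K.mkQ, e.symm.toLinearMap.comp
    (K.mkQ.restrict (p := P.comap K.mkQ) (q := P) (fun x hx => hx)), ?_⟩
  intro n
  obtain ⟨y, hy⟩ := K.mkQ_surjective (e n : (ι →₀ M) ⧸ K)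
  refine ⟨⟨y, ?_⟩, ?_⟩
  · change K.mkQ y ∈ P
    rw [hy]; exact (e n).2
  · simp only [LinearMap.comp_apply, LinearEquiv.coe_coe]
    rw [LinearEquiv.symm_apply_eq]
    exact Subtype.ext hy

lemma InSigma.mk' {ι : Type v} (j : Q →ₗ[A] (ι →₀ M)) (hj : Function.Injective j)
    (g : Q →ₗ[A] N) (hg : Function.Surjective g) : InSigma A M N := by
  let K : Submodule A (ι →₀ M) := (LinearMap.ker g).map j
  obtain ⟨t, ht⟩ := factor_surj g hg (K.mkQ.comp j) (fun x hx => by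
    simpa using ⟨x, hx, rfl⟩)
  have hti : Function.Injective t := by
    rw [← LinearMap.ker_eq_bot, eq_bot_iff]
    intro n hn
    obtain ⟨x, rfl⟩ := hg n
    have h1 : t (g x) = 0 := hn
    rw [ht] at h1
    have h2 : j x ∈ K := by simpa using h1
    obtain ⟨y, hy, hyx⟩ := h2
    rw [← hj hyx]
    exact hy
  exact ⟨ι, K, LinearMap.range t, ⟨LinearEquiv.ofInjective t hti⟩⟩

variable {M}

lemma InSigma.of_surjective (h : InSigma A M N) (g : N →ₗ[A] L) (hg : Function.Surjective g) :
    InSigma A M L := by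
  obtain ⟨ι, W, k, hk⟩ := h.out
  exact InSigma.mk' M W.subtype W.subtype_injective (g.comp k) (hg.comp hk)

lemma InSigma.of_injective (h : InSigma A M N) (g : L →ₗ[A] N) (hg : Function.Injective g) :
    InSigma A M L := by
  obtain ⟨ι, W, k, hk⟩ := h.out
  let V : Submodule A W := (LinearMap.range g).comap k
  let e := LinearEquiv.ofInjective g hg
  refine InSigma.mk' M (Q := V) (W.subtype.comp V.subtype)
    (W.subtype_injective.comp V.subtype_injective)
    (e.symm.toLinearMap.comp (k.restrict (p := V) (q := LinearMap.range g) (fun x hx => hx))) ?_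
  intro l
  obtain ⟨w, hw⟩ := hk (g l)
  refine ⟨⟨w, ⟨l, hw.symm⟩⟩, ?_⟩
  simp only [LinearMap.comp_apply, LinearEquiv.coe_coe]
  rw [LinearEquiv.symm_apply_eq]
  exact Subtype.ext hw

lemma InSigma.prod (h : InSigma A M N) (h' : InSigma A M L) : InSigma A M (N × L) := by
  obtain ⟨ι, W, k, hk⟩ := h.out
  obtain ⟨ι', W', k', hk'⟩ := h'.out
  refine InSigma.mk' M (Q := W × W')
    ((Finsupp.sumFinsuppLEquivProdFinsupp A (M := M) (α := ι) (β := ι')).symm.toLinearMap.comp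
      (W.subtype.prodMap W'.subtype)) ?_ (k.prodMap k') ?_
  · exact (Finsupp.sumFinsuppLEquivProdFinsupp A (M := M) (α := ι) (β := ι')).symm.injective.comp
      (Function.Injective.prodMap W.subtype_injective W'.subtype_injective)
  · exact Function.Surjective.prodMap hk hk'

lemma InSigma.finsupp (h : InSigma A M N) (κ : Type v) : InSigma A M (κ →₀ N) := by
  obtain ⟨ι, W, k, hk⟩ := h.out
  refine InSigma.mk' M (Q := κ →₀ W)
    ((Finsupp.curryLinearEquiv A (M := M) (α := κ) (β := ι)).symm.toLinearMap.comp
      (Finsupp.mapRange.linearMap W.subtype)) ?_ (Finsupp.mapRange.linearMap k) ?_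
  · exact (Finsupp.curryLinearEquiv A (M := M) (α := κ) (β := ι)).symm.injective.comp
      (Finsupp.mapRange_injective _ (map_zero _) W.subtype_injective)
  · exact Finsupp.mapRange_surjective _ (map_zero _) hk

variable (A M) in
lemma InSigma.self : InSigma A M M :=
  InSigma.mk' (ι := PUnit.{v+1}) M (Finsupp.lsingle PUnit.unit) (Finsupp.single_injective _)
    LinearMap.id (fun x => ⟨x, rfl⟩)

end sigma

/-- Every nonsimple subdirectly irreducible module in `σ(M)` splits off. -/
def SplitProp (A : Type u) [Ring A] (M : Type v) [AddCommGroup M] [Module A M] : Prop :=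
  ∀ (X : Type v) [AddCommGroup X] [Module A X], InSigma A M X →
    ∀ s : X, IsMonoAt A s → ¬ IsSimpleModule A X →
    ∀ (N : Type v) [AddCommGroup N] [Module A N], InSigma A M N →
    ∀ g : N →ₗ[A] X, Function.Surjective g → ∃ h : X →ₗ[A] N, ∀ x, g (h x) = x


section lemB
variable {M : Type v} [AddCommGroup M] [Module A M]

/-- Splitting implies the lifting property. -/
lemma SplitProp.lift (hP : SplitProp A M) {X : Type v} [AddCommGroup X] [Module A X]
    (hX : InSigma A M X) {s : X} (hs : IsMonoAt A s) (hns : ¬ IsSimpleModule A X)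
    {N : Type v} [AddCommGroup N] [Module A N] (hN : InSigma A M N)
    {Y : Type*} [AddCommGroup Y] [Module A Y] (g : N →ₗ[A] Y) (hg : Function.Surjective g)
    (f : X →ₗ[A] Y) : ∃ h : X →ₗ[A] N, ∀ x, g (h x) = f x := by
  let Z : Submodule A (N × X) :=
    LinearMap.ker (g.comp (LinearMap.fst A N X) - f.comp (LinearMap.snd A N X))
  have hZ : InSigma A M Z := (hN.prod hX).of_injective Z.subtype Z.subtype_injective
  obtain ⟨h, hh⟩ := hP X hX s hs hns Z hZ ((LinearMap.snd A N X).comp Z.subtype) (by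
    intro x
    obtain ⟨n, hn⟩ := hg (f x)
    exact ⟨⟨(n, x), by simp [Z, LinearMap.mem_ker, hn]⟩, rfl⟩)
  refine ⟨(LinearMap.fst A N X).comp (Z.subtype.comp h), fun x => ?_⟩
  have h1 := (h x).2
  simp only [Z, LinearMap.mem_ker, LinearMap.sub_apply, sub_eq_zero, LinearMap.comp_apply,
    LinearMap.fst_apply, LinearMap.snd_apply] at h1
  have h2 := hh x
  simp only [LinearMap.comp_apply, LinearMap.snd_apply, Submodule.subtype_apply] at h2
  simp only [LinearMap.comp_apply, LinearMap.fst_apply, Submodule.subtype_apply]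
  rw [h1, h2]

variable {X : Type v} [AddCommGroup X] [Module A X]

/-- Proper subdirectly irreducible quotients are simple. -/
lemma SplitProp.quot_simple (hP : SplitProp A M)
    (hX : InSigma A M X) {s : X} (hs : IsMonoAt A s)
    {Y : Type v} [AddCommGroup Y] [Module A Y] (g : X →ₗ[A] Y) (hg : Function.Surjective g)
    (hgs : g s = 0) {t : Y} (ht : IsMonoAt A t) : IsSimpleModule A Y := by
  by_contra hns
  obtain ⟨h, hh⟩ := hP Y (hX.of_surjective g hg) t ht hns X hX g hg
  have h1 : h t ≠ 0 := fun h0 => ht.1 (by rw [← hh t, h0, map_zero])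
  obtain ⟨r, hr⟩ := hs.exists_smul h1
  have h2 : r • t = 0 := by
    rw [← hh (r • t), map_smul, hr, hgs]
  exact hs.1 (by rw [← hr, ← map_smul, h2, map_zero])

lemma SplitProp.exists_coatom (hP : SplitProp A M)
    (hX : InSigma A M X) {s : X} (hs : IsMonoAt A s) {x : X} (hx : x ∉ Submodule.span A {s}) :
    ∃ L : Submodule A X, IsCoatom L ∧ x ∉ L := by
  obtain ⟨C, hC, hxC, hm⟩ := exists_mono _ hx
  refine ⟨C, coatom_of_simple C ?_, hxC⟩
  refine hP.quot_simple hX hs C.mkQ C.mkQ_surjective ?_ hm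
  simpa using hC (Submodule.mem_span_singleton_self s)

lemma SplitProp.nilp (hP : SplitProp A M)
    (hX : InSigma A M X) {s : X} (hs : IsMonoAt A s) (n : X →ₗ[A] X) (hn : n s = 0) (x : X) :
    n (n x) = 0 := by
  by_contra hne
  have hx : n x ≠ 0 := fun h => hne (by rw [h, map_zero])
  obtain ⟨t, hts, ht⟩ := hs.exists_of_injective (LinearMap.range n).subtype
    (Submodule.subtype_injective _) (y := ⟨n x, x, rfl⟩) (fun h => hx (congrArg Subtype.val h))
  have hsim := hP.quot_simple hX hs n.rangeRestrict n.surjective_rangeRestrict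
    (Subtype.ext hn) ht
  have h1 : Submodule.span A {t} = ⊤ := by
    rcases eq_bot_or_eq_top (Submodule.span A {t}) with h | h
    · exact absurd (Submodule.span_singleton_eq_bot.1 h) ht.1
    · exact h
  have h2 : (⟨n x, x, rfl⟩ : LinearMap.range n) ∈ Submodule.span A {t} := by rw [h1]; trivial
  obtain ⟨r, hr⟩ := Submodule.mem_span_singleton.1 h2
  have h3 : n x = r • s := by
    rw [← hts]; exact (congrArg Subtype.val hr).symm
  exact hne (by rw [h3, map_smul, hn, smul_zero])

lemma mono_map_injective {s : X} (hs : IsMonoAt A s) (α : X →ₗ[A] X)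
    (hα : Function.Injective α) : IsMonoAt A (α s) := by
  have h0 : α s ≠ 0 := fun h => hs.1 (hα (by rw [h, map_zero]))
  refine ⟨h0, fun D hD => ?_⟩
  obtain ⟨r, hr⟩ := hs.exists_smul h0
  have h2 : D.comap α ≠ ⊥ := by
    intro h
    have : r • s ∈ D.comap α := by
      change α (r • s) ∈ D
      rw [map_smul, hr]
      exact hs.2 D hD
    rw [h, Submodule.mem_bot] at this
    exact hs.1 (by rw [← hr, ← map_smul, this, map_zero])
  exact hs.2 _ h2

lemma SplitProp.surj_of_retract (hP : SplitProp A M)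
    (hX : InSigma A M X) {t : X} (ht : IsMonoAt A t) (α q : X →ₗ[A] X)
    (hα : Function.Injective α) (hq : q (α t) = t) : Function.Surjective α := by
  have hqi : Function.Injective q :=
    (mono_map_injective ht α hα).injective q (by rw [hq]; exact ht.1)
  have hn := hP.nilp hX ht (q.comp α - LinearMap.id) (by simp [hq])
  intro y
  -- the element `q y` equals `q (α z)` with `z = (1 - n) (q y)`
  refine ⟨q y - (q (α (q y)) - q y), hqi ?_⟩
  have := hn (q y)
  simp only [LinearMap.sub_apply, LinearMap.comp_apply, LinearMap.id_apply, map_sub] at this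
  simp only [map_sub]
  rw [← sub_eq_zero]
  have h3 := congrArg Neg.neg this
  rw [neg_zero] at h3
  rw [← h3]
  abel

lemma SplitProp.surj_of_inj (hP : SplitProp A M)
    (hX : InSigma A M X) {s : X} (hs : IsMonoAt A s) (hns : ¬ IsSimpleModule A X)
    (α : X →ₗ[A] X) (hα : Function.Injective α) : Function.Surjective α := by
  classical
  have hpow : ∀ n : ℕ, Function.Injective ⇑(α ^ n : X →ₗ[A] X) := by
    intro n
    rw [Module.End.coe_pow]
    exact hα.iterate n
  let f : ∀ i j : ℕ, i ≤ j → X →ₗ[A] X := fun i j _ => α ^ (j - i)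
  have : DirectedSystem (fun _ : ℕ => X) (fun i j h => f i j h) :=
    { map_self := fun i x => by simp [f]
      map_map := fun k j i hij hjk x => by
        simp only [f]
        rw [← Module.End.mul_apply, ← pow_add]
        congr 2; omega }
  let E := Module.DirectLimit (fun _ : ℕ => X) f
  let e : ℕ → X →ₗ[A] E := Module.DirectLimit.of A ℕ (fun _ : ℕ => X) f
  have he : ∀ i j (_ : i ≤ j) x, e j ((α ^ (j - i)) x) = e i x := fun i j h x =>
    Module.DirectLimit.of_f (f := f) (hij := h)
  have hei : ∀ i, Function.Injective (e i) := by
    intro i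
    rw [← LinearMap.ker_eq_bot, eq_bot_iff]
    intro x hx
    obtain ⟨j, hij, hj⟩ := Module.DirectLimit.of.zero_exact (f := f) (i := i) (x := x) hx
    exact hpow (j - i) (by rw [map_zero]; exact hj)
  let p : (ULift.{v} ℕ →₀ X) →ₗ[A] E := Finsupp.lsum ℕ (fun n => e n.down)
  have hp1 : ∀ n x, p (Finsupp.single n x) = e n.down x := fun n x => by simp [p]
  have hp : Function.Surjective p := by
    intro y
    obtain ⟨i, x, hx⟩ := Module.DirectLimit.exists_of y
    exact ⟨Finsupp.single ⟨i⟩ x, by rw [hp1]; exact hx⟩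
  have hF : InSigma A M (ULift.{v} ℕ →₀ X) := hX.finsupp _
  have hE : InSigma A M E := hF.of_surjective p hp
  have hpm : ∀ n, IsMonoAt A ((α ^ n) s) := fun n => mono_map_injective hs _ (hpow n)
  have hm : IsMonoAt A (e 0 s) := by
    refine ⟨fun h => hs.1 (hei 0 (by rw [h, map_zero])), fun D hD => ?_⟩
    obtain ⟨y, hy, hy0⟩ := Submodule.exists_mem_ne_zero_of_ne_bot hD
    obtain ⟨i, x, rfl⟩ := Module.DirectLimit.exists_of y
    rw [← he 0 i (Nat.zero_le _) s]
    have hx : x ∈ D.comap (e i) := hy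
    refine (hpm (i - 0)).2 (D.comap (e i)) ?_
    intro h
    rw [h, Submodule.mem_bot] at hx
    exact hy0 (by rw [hx, map_zero])
  have hEns : ¬ IsSimpleModule A E := fun h =>
    hns (simple_of_injective h (e 0) (hei 0) hs.1)
  obtain ⟨h, hh⟩ := hP E hE _ hm hEns _ hF p hp
  obtain ⟨N, hN⟩ : ∃ N : ℕ, ∀ n ∈ (h (e 0 s)).support, n.down ≤ N := by
    refine ⟨(h (e 0 s)).support.sup (fun n => n.down), fun n hn => ?_⟩
    exact Finset.le_sup (f := fun n : ULift.{v} ℕ => n.down) hn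
  let q : E →ₗ[A] X := ∑ n ∈ (h (e 0 s)).support,
    (α ^ (N - n.down)).comp ((Finsupp.lapply n).comp h)
  have hq : q (e 0 s) = (α ^ N) s := by
    apply hei N
    have h1 : e N ((α ^ N) s) = e 0 s := he 0 N (Nat.zero_le _) s
    rw [h1]
    conv_rhs => rw [← hh (e 0 s)]
    simp only [q, LinearMap.sum_apply, LinearMap.comp_apply, Finsupp.lapply_apply, map_sum]
    simp only [p, Finsupp.coe_lsum, Finsupp.sum]
    refine Finset.sum_congr rfl fun n hn => ?_
    exact he _ _ (hN n hn) _
  refine hP.surj_of_retract hX (hpm N) α (q.comp (e (N + 1))) hα ?_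
  rw [LinearMap.comp_apply, ← Module.End.mul_apply, ← pow_succ', ← hq]
  congr 1
  exact he 0 (N + 1) (Nat.zero_le _) s

lemma SplitProp.trichotomy (hP : SplitProp A M)
    (hX : InSigma A M X) {s : X} (hs : IsMonoAt A s) (hns : ¬ IsSimpleModule A X)
    (K : Submodule A X) : K = ⊥ ∨ K = Submodule.span A {s} ∨ K = ⊤ := by
  have huniq : ∀ L₁ L₂ : Submodule A X, IsCoatom L₁ → IsCoatom L₂ → L₁ = L₂ := by
    intro L₁ L₂ h₁ h₂
    by_contra hne
    have hsup : L₁ ⊔ L₂ = ⊤ := h₁.sup_eq_top_of_ne h₂ hne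
    have hN : InSigma A M (L₁ × L₂) :=
      (hX.of_injective L₁.subtype L₁.subtype_injective).prod
        (hX.of_injective L₂.subtype L₂.subtype_injective)
    obtain ⟨h, hh⟩ := hP X hX s hs hns (L₁ × L₂) hN (L₁.subtype.coprod L₂.subtype) (by
      intro x
      have : x ∈ L₁ ⊔ L₂ := by rw [hsup]; trivial
      obtain ⟨a, ha, b, hb, rfl⟩ := Submodule.mem_sup.1 this
      exact ⟨(⟨a, ha⟩, ⟨b, hb⟩), by simp⟩)
    let α : X →ₗ[A] X := L₁.subtype.comp ((LinearMap.fst A _ _).comp h)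
    let β : X →ₗ[A] X := L₂.subtype.comp ((LinearMap.snd A _ _).comp h)
    have hab : ∀ x, α x + β x = x := fun x => by simpa [α, β] using hh x
    by_cases hα : α s = 0
    · have hβ : β s ≠ 0 := fun hb => hs.1 (by rw [← hab s, hα, hb, add_zero])
      have := hP.surj_of_inj hX hs hns β (hs.injective β hβ)
      apply h₂.1
      rw [eq_top_iff]
      intro x _
      obtain ⟨y, rfl⟩ := this x
      exact (h y).2.2
    · have := hP.surj_of_inj hX hs hns α (hs.injective α hα)
      apply h₁.1
      rw [eq_top_iff]
      intro x _
      obtain ⟨y, rfl⟩ := this x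
      exact (h y).1.2
  have hco : IsCoatom (Submodule.span A {s}) := by
    obtain ⟨x, hx⟩ := exists_not_mem_span hs hns
    obtain ⟨L, hL, hxL⟩ := hP.exists_coatom hX hs hx
    have hLs : L ≤ Submodule.span A {s} := by
      intro y hy
      by_contra hys
      obtain ⟨L', hL', hyL'⟩ := hP.exists_coatom hX hs hys
      exact hyL' (huniq L L' hL hL' ▸ hy)
    rcases hL.le_iff.1 hLs with h | h
    · exact absurd (h ▸ Submodule.mem_top) hx
    · rwa [h]
  by_cases hK : K = ⊥
  · exact Or.inl hK
  · right
    have : Submodule.span A {s} ≤ K := by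
      rw [Submodule.span_singleton_le_iff_mem]; exact hs.2 K hK
    rcases hco.le_iff.1 this with h | h
    · exact Or.inr h
    · exact Or.inl h

end lemB


section impl
variable {M : Type v} [AddCommGroup M] [Module A M]

lemma split_of_almostV (h1 : IsAlmostVModule A M) : SplitProp A M := by
  intro X _ _ hX s hs hns N _ _ hN g hg
  let S : Submodule A X := Submodule.span A {s}
  have hsS : s ∈ S := Submodule.mem_span_singleton_self s
  have hS : IsSimpleModule A S := hs.span_simple
  let N₀ : Submodule A N := S.comap g
  let f : N₀ →ₗ[A] S := g.restrict (fun x hx => hx)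
  have hf : ∀ x : N₀, ((f x : S) : X) = g x := fun x => rfl
  -- any element of `N` not killed by `g` has a multiple mapping to `s`
  have hmul : ∀ n : N, g n ≠ 0 → ∃ r : A, g (r • n) = s := by
    intro n hn
    obtain ⟨r, hr⟩ := hs.exists_smul hn
    exact ⟨r, by rw [map_smul, hr]⟩
  have hker : ∀ n : N, g n = 0 → n ∈ N₀ := fun n hn => by
    change g n ∈ S
    rw [hn]; exact S.zero_mem
  rcases h1 S hS N hN N₀ f with ⟨k, hk⟩ | ⟨π, hπ, hπ0, h, hh⟩
  · exfalso
    obtain ⟨x, hx⟩ := exists_not_mem_span hs hns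
    obtain ⟨n, rfl⟩ := hg x
    obtain ⟨m, hm⟩ := hg (k n : X)
    have hmN : m ∈ N₀ := by
      change g m ∈ S
      rw [hm]; exact (k n).2
    have h2 : g (n - m) ≠ 0 := by
      intro h0
      rw [map_sub, sub_eq_zero, hm] at h0
      exact hx (by rw [h0]; exact (k n).2)
    have h3 : k (n - m) = 0 := by
      rw [map_sub, sub_eq_zero, hk ⟨m, hmN⟩]
      exact Subtype.ext (by rw [hf]; exact hm.symm)
    obtain ⟨r, hr⟩ := hmul _ h2
    have h4 : r • (n - m) ∈ N₀ := by
      change g _ ∈ S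
      rw [hr]; exact hsS
    have h5 := hk ⟨_, h4⟩
    simp only [map_smul, h3, smul_zero] at h5
    have h6 := hf ⟨_, h4⟩
    rw [← h5] at h6
    simp only [hr] at h6
    exact hs.1 h6.symm
  · by_cases hz : h ⟨s, hsS⟩ = 0
    · exfalso
      have hfz : ∀ y : S, h y = 0 := by
        rintro ⟨y, hy⟩
        obtain ⟨r, rfl⟩ := Submodule.mem_span_singleton.1 hy
        have : (⟨r • s, hy⟩ : S) = r • ⟨s, hsS⟩ := rfl
        rw [this, map_smul, hz, smul_zero]
      have hπN : ∀ x : N, x ∈ N₀ → π x = 0 := fun x hx => by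
        rw [← hh ⟨x, hx⟩, hfz]; rfl
      apply hπ0
      ext n
      by_contra hd
      have hdd : π (π n) = π n := by
        rw [← Module.End.mul_apply, hπ]
      by_cases hg0 : g (π n) = 0
      · exact hd (by rw [← hdd, hπN _ (hker _ hg0)]; rfl)
      · obtain ⟨r, hr⟩ := hmul _ hg0
        have h4 : r • (π n) ∈ N₀ := by
          change g _ ∈ S
          rw [hr]; exact hsS
        have h5 := hπN _ h4
        rw [map_smul, hdd] at h5
        rw [h5, map_zero] at hr
        exact hs.1 hr.symm
    · have hk1 : ∀ n, g n = 0 → π n = 0 := by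
        intro n hn
        rw [← hh ⟨n, hker n hn⟩]
        have : f ⟨n, hker n hn⟩ = 0 := Subtype.ext hn
        rw [this, map_zero]; rfl
      have hk2 : ∀ n, π n = 0 → g n = 0 := by
        intro n hn
        by_contra hg0
        obtain ⟨r, hr⟩ := hmul _ hg0
        have h4 : r • n ∈ N₀ := by
          change g _ ∈ S
          rw [hr]; exact hsS
        have h5 := hh ⟨_, h4⟩
        have h6 : f ⟨_, h4⟩ = ⟨s, hsS⟩ := Subtype.ext hr
        rw [h6, map_smul, hn, smul_zero] at h5
        exact hz (Subtype.ext h5)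
      obtain ⟨σ, hσ⟩ := factor_surj g hg π hk1
      refine ⟨σ, fun x => ?_⟩
      obtain ⟨n, rfl⟩ := hg x
      rw [hσ, ← sub_eq_zero, ← map_sub]
      apply hk2
      rw [map_sub, ← Module.End.mul_apply, hπ, sub_self]

lemma split_of_two (h2 : ∀ (N : Type v) [AddCommGroup N] [Module A N], InSigma A M N →
          IsVModule A N ∨
            ∃ D : Submodule A N, D ≠ ⊥ ∧ IsDirectSummand A D ∧
              ProjInSigma A M ↥D) : SplitProp A M := by
  intro X _ _ hX s hs hns N _ _ hN g hg
  rcases h2 X hX with hV | ⟨D, hD, ⟨D', hc⟩, hproj⟩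
  · exfalso
    obtain ⟨S, hS, hb⟩ := hV ⊥ (fun h => hs.1 (by
      have : s ∈ (⊤ : Submodule A X) := trivial
      rw [← h] at this
      simpa using this))
    have : s ∉ sInf S := by rw [← hb]; simpa using hs.1
    rw [Submodule.mem_sInf] at this
    push Not at this
    obtain ⟨P, hP, hsP⟩ := this
    have hPb : P = ⊥ := by
      by_contra hne
      exact hsP (hs.2 P hne)
    have hQ : IsSimpleModule A (X ⧸ P) := isSimpleModule_iff_isCoatom.2 (hS P hP)
    exact hns (simple_of_injective hQ P.mkQ (hs.injective _ (by simpa using hsP)) hs.1)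
  · have hD' : D' = ⊥ := by
      by_contra hne
      have := hc.disjoint.le_bot (⟨hs.2 D hD, hs.2 D' hne⟩ : s ∈ D ⊓ D')
      exact hs.1 (by simpa using this)
    have hDt : ∀ x, x ∈ D := by
      intro x
      have := hc.sup_eq_top
      rw [hD', sup_bot_eq] at this
      rw [this]; trivial
    obtain ⟨h, hh⟩ := hproj.2 N X hN hX g hg D.subtype
    exact ⟨h.comp (LinearMap.id.codRestrict D hDt), fun x => by
      rw [LinearMap.comp_apply, hh]; rfl⟩

lemma almostV_of_split (hP : SplitProp A M) : IsAlmostVModule A M := by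
  intro S _ _ hS N _ _ hN N₀ f
  by_cases hf0 : f = 0
  · exact Or.inl ⟨0, fun x => by rw [hf0]; rfl⟩
  obtain ⟨x, hx⟩ : ∃ x, f x ≠ 0 := by
    by_contra h
    push Not at h
    exact hf0 (LinearMap.ext h)
  have hfs : Function.Surjective f := by
    rw [← LinearMap.range_eq_top]
    rcases eq_bot_or_eq_top (LinearMap.range f) with h | h
    · exact absurd (LinearMap.range_eq_bot.1 h) hf0
    · exact h
  obtain ⟨C, hBC, hxC, hm⟩ := exists_mono ((LinearMap.ker f).map N₀.subtype) (x := (x : N)) (by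
    rintro ⟨y, hy, hyx⟩
    exact hx (by rw [← (Subtype.ext hyx : y = x)]; exact hy))
  obtain ⟨t, ht⟩ := factor_surj f hfs (C.mkQ.comp N₀.subtype) (fun y hy => by
    have : (y : N) ∈ C := hBC ⟨y, hy, rfl⟩
    simpa using this)
  by_cases hns : IsSimpleModule A (N ⧸ C)
  · left
    have ht0 : t ≠ 0 := by
      intro h
      have := ht x
      rw [h] at this
      exact hm.1 this.symm
    let e := LinearEquiv.ofBijective t (LinearMap.bijective_of_ne_zero ht0)
    refine ⟨e.symm.toLinearMap.comp C.mkQ, fun y => ?_⟩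
    rw [LinearMap.comp_apply, LinearEquiv.coe_coe, LinearEquiv.symm_apply_eq]
    exact (ht y).symm
  · right
    have hQ : InSigma A M (N ⧸ C) := hN.of_surjective C.mkQ C.mkQ_surjective
    obtain ⟨h, hh⟩ := hP _ hQ _ hm hns N hN C.mkQ C.mkQ_surjective
    have hm2 : ∀ s, (h.comp t) s ∈ LinearMap.range (h.comp C.mkQ) := fun s => by
      obtain ⟨n, hn⟩ := C.mkQ_surjective (t s)
      exact ⟨n, by simp only [LinearMap.comp_apply, hn]⟩
    refine ⟨h.comp C.mkQ, ?_, ?_, (h.comp t).codRestrict _ hm2, ?_⟩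
    · ext n
      change h (C.mkQ (h (C.mkQ n))) = h (C.mkQ n)
      rw [hh]
    · intro h0
      have h3 : h (C.mkQ x) = 0 := LinearMap.congr_fun h0 (x : N)
      apply hm.1
      rw [← hh (C.mkQ x), h3, map_zero]
    · intro y
      change h (t (f y)) = h (C.mkQ y)
      rw [ht]; rfl

lemma SplitProp.proj (hP : SplitProp A M) {X : Type v} [AddCommGroup X] [Module A X]
    (hX : InSigma A M X) {s : X} (hs : IsMonoAt A s) (hns : ¬ IsSimpleModule A X) :
    ProjInSigma A M X :=
  ⟨hX, fun _ _ _ _ _ _ hN _ g hg f => hP.lift hX hs hns hN g hg f⟩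

lemma two_of_split (hP : SplitProp A M) (N : Type v) [AddCommGroup N] [Module A N]
    (hN : InSigma A M N) : IsVModule A N ∨
            ∃ D : Submodule A N, D ≠ ⊥ ∧ IsDirectSummand A D ∧
              ProjInSigma A M ↥D := by
  by_cases hV : IsVModule A N
  · exact Or.inl hV
  right
  rw [IsVModule] at hV
  push Not at hV
  obtain ⟨B, -, hB⟩ := hV
  have hne := hB {P | IsCoatom P ∧ B ≤ P} (fun P h => h.1)
  have hle : B ≤ sInf {P | IsCoatom P ∧ B ≤ P} := le_sInf (fun P h => h.2)
  obtain ⟨x, hx, hxB⟩ := Set.not_subset.1 (fun h => hne (le_antisymm hle h))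
  obtain ⟨C, hBC, hxC, hm⟩ := exists_mono B hxB
  have hns : ¬ IsSimpleModule A (N ⧸ C) := fun h =>
    hxC ((Submodule.mem_sInf.1 hx) C ⟨coatom_of_simple C h, hBC⟩)
  have hQ : InSigma A M (N ⧸ C) := hN.of_surjective C.mkQ C.mkQ_surjective
  obtain ⟨h, hh⟩ := hP _ hQ _ hm hns N hN C.mkQ C.mkQ_surjective
  have hi : Function.Injective h := Function.LeftInverse.injective hh
  let e := LinearEquiv.ofInjective h hi
  have hm' : IsMonoAt A (e (C.mkQ x)) :=
    hm.of_injective e.symm.toLinearMap e.symm.injective (by simp)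
  refine ⟨LinearMap.range h, ?_, ⟨C, ?_⟩, hP.proj ?_ hm' ?_⟩
  · intro h0
    rw [LinearMap.range_eq_bot] at h0
    exact hm.1 (by rw [← hh (C.mkQ x), h0]; simp)
  · constructor
    · rw [disjoint_iff, eq_bot_iff]
      rintro _ ⟨⟨y, rfl⟩, hy⟩
      have : C.mkQ (h y) = 0 := by simpa using hy
      rw [hh] at this
      simp [this]
    · rw [codisjoint_iff, eq_top_iff]
      intro n _
      refine Submodule.mem_sup.2 ⟨h (C.mkQ n), ⟨_, rfl⟩, n - h (C.mkQ n), ?_, by abel⟩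
      have h5 : C.mkQ (n - h (C.mkQ n)) = 0 := by rw [map_sub, hh, sub_self]
      exact (Submodule.Quotient.mk_eq_zero C).1 h5
  · exact hN.of_injective (Submodule.subtype _) (Submodule.subtype_injective _)
  · intro hsim
    exact hns (IsSimpleModule.congr e)

end impl


section three
variable {M : Type v} [AddCommGroup M] [Module A M]

lemma sSupIndep_insert_of_disjoint {N : Type*} [AddCommGroup N] [Module A N]
    {t : Set (Submodule A N)} (ht : sSupIndep t) {a : Submodule A N} (ha : Disjoint a (sSup t)) :
    sSupIndep (insert a t) := by
  intro x hx
  by_cases hxa : x = a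
  · subst hxa
    refine ha.mono_right (sSup_le ?_)
    rintro y ⟨hy | hy, hyx⟩
    · exact absurd hy hyx
    · exact le_sSup hy
  · have hxt : x ∈ t := hx.resolve_left hxa
    have h1 : Disjoint x (sSup (t \ {x})) := ht hxt
    have h2 : Disjoint (x ⊔ sSup (t \ {x})) a :=
      (ha.mono_right (sup_le (le_sSup hxt) (sSup_le_sSup Set.sdiff_subset))).symm
    refine (h1.disjoint_sup_right_of_disjoint_sup_left h2).mono_right (sSup_le ?_)
    rintro y ⟨hy | hy, hyx⟩
    · rw [hy]; exact le_sup_right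
    · exact (le_sSup (show y ∈ t \ {x} from ⟨hy, hyx⟩)).trans le_sup_left

lemma mem_of_simple_span {N : Type*} [AddCommGroup N] [Module A N] {ι : Type*}
    (p : ι → Submodule A N) (hp : iSupIndep p) (C : Submodule A N)
    (hC : ∀ i, ∀ y ∈ p i, IsSimpleModule A (Submodule.span A {y}) → y ∈ C)
    {x : N} (hx : x ∈ ⨆ i, p i) (hsim : IsSimpleModule A (Submodule.span A {x})) : x ∈ C := by
  classical
  let L := DFinsupp.lsum ℕ (fun i => (p i).subtype)
  let e := LinearEquiv.ofInjective L hp.dfinsupp_lsum_injective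
  let S := Submodule.span A {x}
  rw [Submodule.iSup_eq_range_dfinsupp_lsum] at hx
  have hle : S ≤ LinearMap.range L := (Submodule.span_singleton_le_iff_mem _ _).2 hx
  let z := e.symm ⟨x, hx⟩
  have hz : ∀ i, ((z i : p i) : N) ∈ C := by
    intro i
    by_cases h0 : z i = 0
    · rw [h0]; exact C.zero_mem
    refine hC i _ (z i).2 ?_
    let k : S →ₗ[A] N := (p i).subtype.comp
      ((DFinsupp.lapply i).comp (e.symm.toLinearMap.comp (Submodule.inclusion hle)))
    let x' : S := ⟨x, Submodule.mem_span_singleton_self x⟩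
    have hk : k x' = z i := rfl
    have hk0 : k ≠ 0 := by
      intro h
      rw [h] at hk
      exact h0 (Subtype.ext hk.symm)
    have hki : Function.Injective k := LinearMap.injective_of_ne_zero hk0
    have hr : LinearMap.range k = Submodule.span A {((z i : p i) : N)} := by
      apply le_antisymm
      · rintro _ ⟨⟨y, hy⟩, rfl⟩
        obtain ⟨r, rfl⟩ := Submodule.mem_span_singleton.1 hy
        have : (⟨r • x, hy⟩ : S) = r • x' := rfl
        rw [this, map_smul, hk]
        exact Submodule.smul_mem _ _ (Submodule.mem_span_singleton_self _)
      · rw [Submodule.span_singleton_le_iff_mem, ← hk]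
        exact ⟨x', rfl⟩
    rw [← hr]
    exact IsSimpleModule.congr (LinearEquiv.ofInjective k hki).symm
  have hx2 : x = (e z : N) := (congrArg Subtype.val (e.apply_symm_apply ⟨x, hx⟩)).symm
  rw [hx2]
  have h3 : (e z : N) = DFinsupp.lsum ℕ (fun i => (p i).subtype) z := rfl
  rw [h3, DFinsupp.lsum_apply_apply, DFinsupp.sumAddHom_apply]
  exact Submodule.sum_mem _ (fun i _ => hz i)

lemma SplitProp.relInjective (hP : SplitProp A M) {X : Type v} [AddCommGroup X] [Module A X]
    (hX : InSigma A M X) {s : X} (hs : IsMonoAt A s) (hns : ¬ IsSimpleModule A X) :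
    RelInjective A M X := by
  intro K f
  let k : K →ₗ[A] M × X := K.subtype.prod (-f)
  have hx : ((0, s) : M × X) ∉ LinearMap.range k := by
    rintro ⟨y, hy⟩
    have h1 : (y : M) = 0 := congrArg Prod.fst hy
    have h2 : -f y = s := congrArg Prod.snd hy
    have h3 : y = 0 := Subtype.ext h1
    rw [h3, map_zero, neg_zero] at h2
    exact hs.1 h2.symm
  obtain ⟨C, hBC, hxC, hm⟩ := exists_mono _ hx
  have hQ : InSigma A M ((M × X) ⧸ C) :=
    ((InSigma.self A M).prod hX).of_surjective C.mkQ C.mkQ_surjective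
  let j : X →ₗ[A] (M × X) ⧸ C := C.mkQ.comp (LinearMap.inr A M X)
  have hji : Function.Injective j := hs.injective j hm.1
  have hQns : ¬ IsSimpleModule A ((M × X) ⧸ C) := fun h =>
    hns (simple_of_injective h j hji hs.1)
  have hjs : Function.Surjective j := by
    rw [← LinearMap.range_eq_top]
    rcases hP.trichotomy hQ hm hQns (LinearMap.range j) with h | h | h
    · exfalso
      rw [LinearMap.range_eq_bot] at h
      apply hm.1
      change j s = 0
      rw [h]; rfl
    · exfalso
      apply hns
      have hsim := hm.span_simple
      rw [← h] at hsim
      exact IsSimpleModule.congr (LinearEquiv.ofInjective j hji)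
    · exact h
  let e := LinearEquiv.ofBijective j ⟨hji, hjs⟩
  refine ⟨e.symm.toLinearMap.comp (C.mkQ.comp (LinearMap.inl A M X)), fun y => ?_⟩
  rw [LinearMap.comp_apply, LinearEquiv.coe_coe, LinearEquiv.symm_apply_eq]
  change C.mkQ ((y : M), (0 : X)) = C.mkQ ((0 : M), f y)
  rw [← sub_eq_zero, ← map_sub]
  have h4 : k y ∈ C := hBC ⟨y, rfl⟩
  have h5 : (((y : M), (0 : X)) - ((0 : M), f y)) = k y := by
    ext <;> simp [k]
  rw [h5]
  exact (Submodule.Quotient.mk_eq_zero C).2 h4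

lemma three_of_split (hP : SplitProp A M) : ∃ (ι : Type v) (B : ι → Submodule A M),
    iSupIndep B ∧
          (∀ i, IsLocalModule A ↥(B i) ∧ HasLengthTwo A ↥(B i) ∧
            RelInjective A M ↥(B i) ∧ RelProjective A M ↥(B i)) ∧
          (modRad A M = ⨆ i, (modRad A ↥(B i)).map (B i).subtype) ∧
          IsVModule A (M ⧸ modRad A M) := by
  have hM : InSigma A M M := InSigma.self A M
  let G : Set (Submodule A M) := {B | (∃ s : B, IsMonoAt A s) ∧ ¬ IsSimpleModule A B}
  obtain ⟨t, ht⟩ := zorn_subset {t : Set (Submodule A M) | sSupIndep t ∧ t ⊆ G} (by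
    intro c hc hch
    refine ⟨⋃₀ c, ⟨iSupIndep_sUnion_of_directed hch.directedOn fun s hs => (hc hs).1, ?_⟩,
      fun s hs => Set.subset_sUnion_of_mem hs⟩
    exact Set.sUnion_subset fun s hs => (hc hs).2)
  obtain ⟨⟨hind, htG⟩, hmax⟩ := ht
  have hind' : iSupIndep (fun i : t => (i : Submodule A M)) := (sSupIndep_iff t).1 hind
  have hsig : ∀ B : Submodule A M, InSigma A M B := fun B =>
    hM.of_injective B.subtype B.subtype_injective
  have hcoat : ∀ B : Submodule A M, ∀ s : B, IsMonoAt A s → ¬ IsSimpleModule A B →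
      IsCoatom (Submodule.span A {s}) := by
    intro B s hs hns
    refine ⟨fun h => ?_, fun K hK => ?_⟩
    · exact hns (simple_iff_span hs (fun x => by rw [h]; trivial))
    · rcases hP.trichotomy (hsig B) hs hns K with h | h | h
      · rw [h] at hK
        exact absurd hK not_lt_bot
      · rw [h] at hK
        exact absurd hK (lt_irrefl _)
      · exact h
  refine ⟨t, fun i => i, hind', ?_, ?_, ?_⟩
  · intro i
    obtain ⟨⟨s, hs⟩, hns⟩ := htG i.2
    have hco := hcoat _ s hs hns
    refine ⟨⟨Submodule.span A {s}, hco.1, fun K hK => ?_⟩,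
      ⟨Submodule.span A {s}, isSimpleModule_iff_isAtom.1 hs.span_simple, hco⟩,
      hP.relInjective (hsig _) hs hns, fun K f => ?_⟩
    · rcases hP.trichotomy (hsig _) hs hns K with h | h | h
      · rw [h]; exact bot_le
      · exact h.le
      · exact absurd h hK
    · exact hP.lift (hsig _) hs hns hM K.mkQ K.mkQ_surjective f
  · apply le_antisymm
    · intro x hx
      by_contra hxB
      obtain ⟨C, hBC, hxC, hm⟩ := exists_mono _ hxB
      have hns : ¬ IsSimpleModule A (M ⧸ C) := fun h =>
        hxC ((Submodule.mem_sInf.1 hx) C (coatom_of_simple C h))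
      have hQ : InSigma A M (M ⧸ C) := hM.of_surjective C.mkQ C.mkQ_surjective
      obtain ⟨h, hh⟩ := hP _ hQ _ hm hns M hM C.mkQ C.mkQ_surjective
      have hi : Function.Injective h := Function.LeftInverse.injective hh
      let e := LinearEquiv.ofInjective h hi
      let s' := e (C.mkQ x)
      have hs' : IsMonoAt A s' :=
        hm.of_injective e.symm.toLinearMap e.symm.injective (by simp [s'])
      have hs'h : (s' : M) = h (C.mkQ x) := rfl
      have hns' : ¬ IsSimpleModule A (LinearMap.range h) := fun hsim =>
        hns (IsSimpleModule.congr e)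
      have hs'0 : (s' : M) ≠ 0 := fun h0 => hs'.1 (Subtype.ext h0)
      have hdis : Disjoint (LinearMap.range h) (sSup t) := by
        rw [disjoint_iff]
        by_contra hne
        obtain ⟨y, ⟨hy1, hy2⟩, hy0⟩ := Submodule.exists_mem_ne_zero_of_ne_bot hne
        have hy0' : (⟨y, hy1⟩ : LinearMap.range h) ≠ 0 := fun h0 => hy0 (congrArg Subtype.val h0)
        obtain ⟨r, hr⟩ := hs'.exists_smul hy0'
        have hr' : r • y = (s' : M) := congrArg Subtype.val hr
        have hmem : (s' : M) ∈ ⨆ i : t, (i : Submodule A M) := by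
          rw [← sSup_eq_iSup', ← hr']
          exact Submodule.smul_mem _ _ hy2
        have hsimp : IsSimpleModule A (Submodule.span A {(s' : M)}) := by
          have h1 := hs'.span_simple
          have h2 : (Submodule.span A {s'}).map (LinearMap.range h).subtype =
              Submodule.span A {(s' : M)} := by
            rw [Submodule.map_span]; simp
          rw [← h2]
          exact IsSimpleModule.congr (Submodule.equivSubtypeMap _ _).symm
        have hsC : (s' : M) ∈ C := by
          refine mem_of_simple_span _ hind' C ?_ hmem hsimp
          intro i y hyi hysim
          obtain ⟨⟨s, hs⟩, hnsi⟩ := htG i.2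
          have hy0 : y ≠ 0 := by
            intro h0
            rw [isSimpleModule_iff_isAtom, h0] at hysim
            exact hysim.1 (by simp)
          have hyi0 : (⟨y, hyi⟩ : (i : Submodule A M)) ≠ 0 :=
            fun h0 => hy0 (congrArg Subtype.val h0)
          obtain ⟨r, hr⟩ := hs.exists_smul hyi0
          have hr' : r • y = (s : M) := congrArg Subtype.val hr
          rw [isSimpleModule_iff_isAtom] at hysim
          have hle : Submodule.span A {(s : M)} ≤ Submodule.span A {y} := by
            rw [Submodule.span_singleton_le_iff_mem, ← hr']
            exact Submodule.smul_mem _ _ (Submodule.mem_span_singleton_self _)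
          have hys : y ∈ Submodule.span A {(s : M)} := by
            rcases hysim.le_iff.1 hle with h | h
            · exact absurd (Subtype.ext (Submodule.span_singleton_eq_bot.1 h)) hs.1
            · rw [h]; exact Submodule.mem_span_singleton_self _
          have hsC : (s : M) ∈ C := by
            apply hBC
            refine (le_iSup (fun i : t => (modRad A (i : Submodule A M)).map
              (i : Submodule A M).subtype) i) ?_
            exact ⟨s, mem_modRad_of_mono hs hnsi LinearMap.id, rfl⟩
          exact (Submodule.span_singleton_le_iff_mem _ _).2 hsC hys
        apply hm.1
        rw [← hh (C.mkQ x), ← hs'h]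
        exact (Submodule.Quotient.mk_eq_zero C).2 hsC
      have hin : insert (LinearMap.range h) t ⊆ t := hmax
        ⟨sSupIndep_insert_of_disjoint hind hdis,
          Set.insert_subset ⟨⟨s', hs'⟩, hns'⟩ htG⟩ (Set.subset_insert _ _)
      have hle := le_sSup (hin (Set.mem_insert _ _))
      have hbot : LinearMap.range h = ⊥ := hdis.eq_bot_of_le hle
      exact hs'0 ((Submodule.mem_bot A).1 (hbot.le s'.2))
    · refine iSup_le fun i => ?_
      obtain ⟨⟨s, hs⟩, hns⟩ := htG i.2
      rintro _ ⟨y, hy, rfl⟩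
      have h1 : y ∈ Submodule.span A {s} := (Submodule.mem_sInf.1 hy) _ (hcoat _ s hs hns)
      obtain ⟨r, rfl⟩ := Submodule.mem_span_singleton.1 h1
      rw [map_smul]
      exact Submodule.smul_mem _ _ (mem_modRad_of_mono hs hns _)
  · intro B _
    refine ⟨{P | IsCoatom P ∧ B ≤ P}, fun P h => h.1, le_antisymm (le_sInf fun P h => h.2) ?_⟩
    intro x hx
    by_contra hxB
    obtain ⟨C, hBC, hxC, hm⟩ := exists_mono B hxB
    have hns : ¬ IsSimpleModule A ((M ⧸ modRad A M) ⧸ C) := fun h =>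
      hxC ((Submodule.mem_sInf.1 hx) C ⟨coatom_of_simple C h, hBC⟩)
    let g : M →ₗ[A] (M ⧸ modRad A M) ⧸ C := C.mkQ.comp (modRad A M).mkQ
    have hg : Function.Surjective g := C.mkQ_surjective.comp (modRad A M).mkQ_surjective
    obtain ⟨h, hh⟩ := hP _ (hM.of_surjective g hg) _ hm hns M hM g hg
    have h1 := mem_modRad_of_mono hm hns h
    apply hm.1
    rw [← hh (C.mkQ x)]
    change C.mkQ ((modRad A M).mkQ (h (C.mkQ x))) = 0
    have : (modRad A M).mkQ (h (C.mkQ x)) = 0 := (Submodule.Quotient.mk_eq_zero _).2 h1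
    rw [this, map_zero]

end three


section five
variable {M : Type v} [AddCommGroup M] [Module A M]

lemma ess_split {Q Y U : Type*} [AddCommGroup Q] [Module A Q] [AddCommGroup Y] [Module A Y]
    [AddCommGroup U] [Module A U] {t : Y} (ht : IsMonoAt A t) (g0 : U →ₗ[A] Y)
    (hg0 : Function.Injective g0) {u : U} (hu : u ≠ 0) (hinj : RelInjective A Q U)
    {κ : Type*} (φ : κ → Q →ₗ[A] Y) (hgen : ⨆ i, LinearMap.range (φ i) = ⊤) :
    Function.Surjective g0 := by
  rw [← LinearMap.range_eq_top, eq_top_iff, ← hgen]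
  refine iSup_le fun i => ?_
  have htr : t ∈ LinearMap.range g0 := ht.2 _ (fun h => by
    rw [LinearMap.range_eq_bot] at h
    exact hu (hg0 (by rw [h]; rfl)))
  let e := LinearEquiv.ofInjective g0 hg0
  obtain ⟨ψ, hψ⟩ := hinj ((LinearMap.range g0).comap (φ i))
    (e.symm.toLinearMap.comp
      ((φ i).restrict (p := (LinearMap.range g0).comap (φ i)) (q := LinearMap.range g0)
        (fun x hx => hx)))
  have key : ∀ m, φ i m ∈ LinearMap.range g0 → g0 (ψ m) = φ i m := by
    intro m hm
    have h1 := hψ ⟨m, hm⟩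
    change ψ m = _ at h1
    have h2 : e (ψ m) = ⟨φ i m, hm⟩ := by
      rw [h1]
      exact e.apply_symm_apply _
    exact congrArg Subtype.val h2
  rintro _ ⟨m, rfl⟩
  by_contra hm
  have hne : φ i m - g0 (ψ m) ≠ 0 := by
    intro h
    rw [sub_eq_zero] at h
    exact hm ⟨_, h.symm⟩
  obtain ⟨r, hr⟩ := ht.exists_smul hne
  have h3 : φ i (r • m) - g0 (ψ (r • m)) = t := by
    rw [← hr, map_smul, map_smul, map_smul, smul_sub]
  have h4 : φ i (r • m) ∈ LinearMap.range g0 := by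
    have : φ i (r • m) = t + g0 (ψ (r • m)) := by rw [← h3]; abel
    rw [this]
    exact Submodule.add_mem _ htr ⟨_, rfl⟩
  rw [key _ h4, sub_self] at h3
  exact ht.1 h3.symm

lemma relInjective_of_V {Q T : Type*} [AddCommGroup Q] [Module A Q] [AddCommGroup T] [Module A T]
    (hV : IsVModule A Q) (hT : IsSimpleModule A T) : RelInjective A Q T := by
  intro K f
  by_cases hf : f = 0
  · exact ⟨0, fun x => by rw [hf]; rfl⟩
  obtain ⟨x, hx⟩ : ∃ x, f x ≠ 0 := by
    by_contra h
    push Not at h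
    exact hf (LinearMap.ext h)
  let B : Submodule A Q := (LinearMap.ker f).map K.subtype
  have hxB : (x : Q) ∉ B := by
    rintro ⟨y, hy, hyx⟩
    have : y = x := Subtype.ext hyx
    rw [this] at hy
    exact hx hy
  obtain ⟨S, hS, hb⟩ := hV B (fun h => hxB (by rw [h]; trivial))
  rw [hb, Submodule.mem_sInf] at hxB
  push Not at hxB
  obtain ⟨P, hPS, hxP⟩ := hxB
  have hBP : B ≤ P := by rw [hb]; exact sInf_le hPS
  have hfs : Function.Surjective f := LinearMap.surjective_of_ne_zero hf
  obtain ⟨t, ht⟩ := factor_surj f hfs (P.mkQ.comp K.subtype) (fun y hy => by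
    exact (Submodule.Quotient.mk_eq_zero P).2 (hBP ⟨y, hy, rfl⟩))
  have hsim : IsSimpleModule A (Q ⧸ P) := isSimpleModule_iff_isCoatom.2 (hS P hPS)
  have ht0 : t ≠ 0 := by
    intro h
    have h1 := ht x
    rw [h] at h1
    exact hxP ((Submodule.Quotient.mk_eq_zero P).1 h1.symm)
  let e := LinearEquiv.ofBijective t (LinearMap.bijective_of_ne_zero ht0)
  refine ⟨e.symm.toLinearMap.comp P.mkQ, fun y => ?_⟩
  rw [LinearMap.comp_apply, LinearEquiv.coe_coe, LinearEquiv.symm_apply_eq]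
  exact (ht y).symm

lemma lift_one {U Q : Type*} [AddCommGroup U] [Module A U] [AddCommGroup Q] [Module A Q]
    (hU : RelProjective A M U) (g : M →ₗ[A] Q) (f : U →ₗ[A] Q)
    (hf : ∀ x, f x ∈ LinearMap.range g) : ∃ h : U →ₗ[A] M, ∀ x, g (h x) = f x := by
  obtain ⟨h, hh⟩ := hU (LinearMap.ker g)
    (g.quotKerEquivRange.symm.toLinearMap.comp (f.codRestrict _ hf))
  refine ⟨h, fun x => ?_⟩
  have h1 := hh x
  rw [LinearMap.comp_apply, LinearEquiv.coe_coe, LinearEquiv.eq_symm_apply] at h1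
  exact congrArg Subtype.val h1

lemma lift_fin {U Q : Type*} [AddCommGroup U] [Module A U] [AddCommGroup Q] [Module A Q]
    (hU : RelProjective A M U) {ι : Type*} (q : ι → M →ₗ[A] Q) (s : Finset ι) :
    ∀ (f : U →ₗ[A] Q), (∀ x, f x ∈ ⨆ i ∈ s, LinearMap.range (q i)) →
      ∃ h : U →ₗ[A] (ι →₀ M), ∀ x, Finsupp.lsum ℕ q (h x) = f x := by
  classical
  induction s using Finset.induction_on with
  | empty =>
    intro f hf
    refine ⟨0, fun x => ?_⟩
    have := hf x
    simp at this
    simp [this]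
  | insert j s hj ih =>
    intro f hf
    let B : Submodule A Q := ⨆ i ∈ s, LinearMap.range (q i)
    obtain ⟨h, hh⟩ := lift_one hU (B.mkQ.comp (q j)) (B.mkQ.comp f) (fun x => by
      have h1 := hf x
      rw [Finset.iSup_insert, Submodule.mem_sup] at h1
      obtain ⟨_, ⟨m, rfl⟩, z, hz, hx⟩ := h1
      refine ⟨m, ?_⟩
      have hz' : B.mkQ z = 0 := (Submodule.Quotient.mk_eq_zero B).2 hz
      rw [LinearMap.comp_apply, LinearMap.comp_apply, ← hx, map_add, hz', add_zero])
    obtain ⟨h', hh'⟩ := ih (f - (q j).comp h) (fun x => by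
      have h1 := hh x
      rw [LinearMap.comp_apply, LinearMap.comp_apply] at h1
      apply (Submodule.Quotient.mk_eq_zero B).1
      change B.mkQ (f x - q j (h x)) = 0
      rw [map_sub, h1, sub_self])
    refine ⟨h' + (Finsupp.lsingle j).comp h, fun x => ?_⟩
    rw [LinearMap.add_apply, map_add, hh']
    simp

lemma proj_split {U Z : Type*} [AddCommGroup U] [Module A U] [AddCommGroup Z] [Module A Z]
    (hU : RelProjective A M U) {a : U} (ha : ∀ x, x ∈ Submodule.span A {a})
    (hZ : InSigma A M Z) (g : Z →ₗ[A] U) (hg : Function.Surjective g) :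
    ∃ h : U →ₗ[A] Z, ∀ x, g (h x) = x := by
  classical
  obtain ⟨ι, W, k, hk⟩ := hZ.out
  let gk : W →ₗ[A] U := g.comp k
  have hgk : Function.Surjective gk := hg.comp hk
  let K : Submodule A (ι →₀ M) := (LinearMap.ker gk).map W.subtype
  obtain ⟨f, hf⟩ := factor_surj gk hgk (K.mkQ.comp W.subtype) (fun y hy =>
    (Submodule.Quotient.mk_eq_zero K).2 ⟨y, hy, rfl⟩)
  let q : ι → M →ₗ[A] (ι →₀ M) ⧸ K := fun i => K.mkQ.comp (Finsupp.lsingle i)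
  obtain ⟨y, hy⟩ := K.mkQ_surjective (f a)
  have hq : ∀ z, Finsupp.lsum ℕ q z = K.mkQ z := by
    intro z
    have : (Finsupp.lsum ℕ q : (ι →₀ M) →ₗ[A] _) = K.mkQ := by
      apply Finsupp.lhom_ext
      intro i m
      simp [q]
    rw [this]
  obtain ⟨h, hh⟩ := lift_fin hU q y.support f (fun x => by
    obtain ⟨r, rfl⟩ := Submodule.mem_span_singleton.1 (ha x)
    rw [map_smul]
    refine Submodule.smul_mem _ _ ?_
    rw [← hy, ← hq, Finsupp.lsum_apply]
    refine Submodule.sum_mem _ fun i hi => ?_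
    exact (le_iSup₂ (f := fun i (_ : i ∈ y.support) => LinearMap.range (q i)) i hi) ⟨_, rfl⟩)
  have hW : ∀ x, ∃ w : W, (w : ι →₀ M) = h x ∧ gk w = x := by
    intro x
    obtain ⟨w, hw⟩ := hgk x
    have h1 := hh x
    rw [hq, ← hw, hf] at h1
    change K.mkQ (h (gk w)) = K.mkQ (w : ι →₀ M) at h1
    rw [← sub_eq_zero, ← map_sub] at h1
    obtain ⟨w', hw', hw'e⟩ := (Submodule.Quotient.mk_eq_zero K).1 h1
    refine ⟨w' + w, ?_, ?_⟩
    · have h2 : (w' : ι →₀ M) = h (gk w) - w := hw'e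
      rw [Submodule.coe_add, h2, hw]
      abel
    · have h3 : gk w' = 0 := hw'
      rw [map_add, h3, zero_add, hw]
  have hmem : ∀ x, h x ∈ W := fun x => by
    obtain ⟨w, hw, _⟩ := hW x
    rw [← hw]; exact w.2
  refine ⟨k.comp (h.codRestrict W hmem), fun x => ?_⟩
  obtain ⟨w, hw, hx⟩ := hW x
  have h4 : h.codRestrict W hmem x = w := Subtype.ext hw.symm
  rw [LinearMap.comp_apply, h4]
  exact hx

lemma local_two {U : Type*} [AddCommGroup U] [Module A U] (h1 : IsLocalModule A U)
    (h2 : HasLengthTwo A U) : ∃ S : Submodule A U, IsAtom S ∧ IsCoatom S ∧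
      ∀ K : Submodule A U, K = ⊥ ∨ K = S ∨ K = ⊤ := by
  obtain ⟨P, hP, hmax⟩ := h1
  obtain ⟨S, hS, hS'⟩ := h2
  refine ⟨S, hS, hS', fun K => ?_⟩
  by_cases hK : K = ⊤
  · exact Or.inr (Or.inr hK)
  have hSP : P = S := by
    rcases hS'.le_iff.1 (hmax S hS'.1) with h | h
    · exact absurd h hP
    · exact h
  have := hmax K hK
  rw [hSP] at this
  rcases hS.le_iff.1 this with h | h
  · exact Or.inl h
  · exact Or.inr (Or.inl h)

lemma split_of_three (h3 : ∃ (ι : Type v) (B : ι → Submodule A M),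
    iSupIndep B ∧
          (∀ i, IsLocalModule A ↥(B i) ∧ HasLengthTwo A ↥(B i) ∧
            RelInjective A M ↥(B i) ∧ RelProjective A M ↥(B i)) ∧
          (modRad A M = ⨆ i, (modRad A ↥(B i)).map (B i).subtype) ∧
          IsVModule A (M ⧸ modRad A M)) : SplitProp A M := by
  obtain ⟨κ, B, -, hB, hrad, hV⟩ := h3
  intro X _ _ hX s hs hns N _ _ hN g hg
  obtain ⟨ι, K, P, ⟨e⟩⟩ := hX
  have hx : (e s : (ι →₀ M) ⧸ K) ∉ (⊥ : Submodule A ((ι →₀ M) ⧸ K)) := by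
    intro h
    rw [Submodule.mem_bot] at h
    exact hs.1 (e.injective (by rw [map_zero]; exact Subtype.ext h))
  obtain ⟨C, -, hxC, hm⟩ := exists_mono _ hx
  let j : X →ₗ[A] ((ι →₀ M) ⧸ K) ⧸ C := C.mkQ.comp (P.subtype.comp e.toLinearMap)
  have hj : Function.Injective j := hs.injective j hm.1
  let φ : ι → M →ₗ[A] ((ι →₀ M) ⧸ K) ⧸ C := fun i => (C.mkQ.comp K.mkQ).comp (Finsupp.lsingle i)
  have hgen : ⨆ i, LinearMap.range (φ i) = ⊤ := by
    rw [eq_top_iff]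
    intro y _
    obtain ⟨y, rfl⟩ := C.mkQ_surjective y
    obtain ⟨y, rfl⟩ := K.mkQ_surjective y
    induction y using Finsupp.induction_linear with
    | zero => rw [map_zero, map_zero]; exact Submodule.zero_mem _
    | add a b ha hb => rw [map_add, map_add]; exact Submodule.add_mem _ (ha trivial) (hb trivial)
    | single i m => exact (le_iSup (fun i => LinearMap.range (φ i)) i) ⟨m, rfl⟩
  by_cases hk : ∀ i, modRad A M ≤ LinearMap.ker (φ i)
  · exfalso
    have hsim := hm.span_simple
    have hsurj := ess_split hm (Submodule.span A {C.mkQ (e s : (ι →₀ M) ⧸ K)}).subtype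
      (Submodule.subtype_injective _)
      (u := ⟨_, Submodule.mem_span_singleton_self _⟩) (fun h => hm.1 (congrArg Subtype.val h))
      (relInjective_of_V hV hsim) (fun i => (modRad A M).liftQ (φ i) (hk i)) (by
        rw [← hgen]
        congr 1
        funext i
        exact Submodule.range_liftQ _ _ _)
    have hY : IsSimpleModule A (((ι →₀ M) ⧸ K) ⧸ C) := IsSimpleModule.congr
      (LinearEquiv.ofBijective _ ⟨Submodule.subtype_injective _, hsurj⟩).symm
    exact hns (simple_of_injective hY j hj hs.1)
  · push Not at hk
    obtain ⟨i, hi⟩ := hk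
    obtain ⟨l, hl⟩ : ∃ l, ¬ (modRad A (B l)).map (B l).subtype ≤ LinearMap.ker (φ i) := by
      by_contra h
      push Not at h
      exact hi (by rw [hrad]; exact iSup_le h)
    obtain ⟨hloc, hlen, hin, hpr⟩ := hB l
    obtain ⟨S, hS, hS', htri⟩ := local_two hloc hlen
    let ψ : B l →ₗ[A] ((ι →₀ M) ⧸ K) ⧸ C := (φ i).comp (B l).subtype
    have hSk : ¬ S ≤ LinearMap.ker ψ := by
      intro h
      apply hl
      rintro _ ⟨y, hy, rfl⟩
      exact h ((Submodule.mem_sInf.1 hy) S hS')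
    have hψ : Function.Injective ψ := by
      rw [← LinearMap.ker_eq_bot]
      rcases htri (LinearMap.ker ψ) with h | h | h
      · exact h
      · exact absurd h.ge hSk
      · exact absurd (by rw [h]; exact le_top) hSk
    obtain ⟨u, -, hu⟩ := Submodule.exists_mem_ne_zero_of_ne_bot hS.1
    have hψs : Function.Surjective ψ := ess_split hm ψ hψ hu hin φ hgen
    let E := LinearEquiv.ofBijective ψ ⟨hψ, hψs⟩
    let θ : X →ₗ[A] B l := E.symm.toLinearMap.comp j
    have hθ : Function.Injective θ := E.symm.injective.comp hj
    have hθs : Function.Surjective θ := by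
      rw [← LinearMap.range_eq_top]
      rcases htri (LinearMap.range θ) with h | h | h
      · exfalso
        rw [LinearMap.range_eq_bot] at h
        exact hs.1 (hθ (by rw [h]; rfl))
      · exfalso
        have hsim : IsSimpleModule A S := isSimpleModule_iff_isAtom.2 hS
        rw [← h] at hsim
        exact hns (IsSimpleModule.congr (LinearEquiv.ofInjective θ hθ))
      · exact h
    obtain ⟨a, ha⟩ : ∃ a : B l, a ∉ S := by
      by_contra h
      push Not at h
      exact hS'.1 (eq_top_iff.2 fun x _ => h x)
    have hgena : ∀ x, x ∈ Submodule.span A {a} := by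
      intro x
      have haa := Submodule.mem_span_singleton_self (R := A) a
      rcases htri (Submodule.span A {a}) with h | h | h
      · rw [h, Submodule.mem_bot] at haa
        rw [haa] at ha
        exact absurd S.zero_mem ha
      · rw [h] at haa
        exact absurd haa ha
      · rw [h]; trivial
    obtain ⟨h, hh⟩ := proj_split hpr hgena hN (θ.comp g) (hθs.comp hg)
    exact ⟨h.comp θ, fun x => hθ (hh (θ x))⟩

end five


end Helpers

/-- Theorem 2.3: for a module `M`, TFAE: (1) `M` is an almost `V`-module; (2) every module
in `σ(M)` is a `V`-module or has a nonzero direct summand projective in `σ(M)`;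
(3) there is an independent family of local submodules `Aᵢ`, each `M`-injective and
`M`-projective of length two, with `J(M) = ⊕ J(Aᵢ)` and `M/J(M)` a `V`-module. -/
theorem almostVModule_tfae (R : Type u) [Ring R] (M : Type v) [AddCommGroup M]
    [Module Rᵐᵒᵖ M] :
    List.TFAE
      [ IsAlmostVModule Rᵐᵒᵖ M,
        ∀ (N : Type v) [AddCommGroup N] [Module Rᵐᵒᵖ N], InSigma Rᵐᵒᵖ M N →
          IsVModule Rᵐᵒᵖ N ∨
            ∃ D : Submodule Rᵐᵒᵖ N, D ≠ ⊥ ∧ IsDirectSummand Rᵐᵒᵖ D ∧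
              ProjInSigma Rᵐᵒᵖ M ↥D,
        ∃ (ι : Type v) (A : ι → Submodule Rᵐᵒᵖ M), iSupIndep A ∧
          (∀ i, IsLocalModule Rᵐᵒᵖ ↥(A i) ∧ HasLengthTwo Rᵐᵒᵖ ↥(A i) ∧
            RelInjective Rᵐᵒᵖ M ↥(A i) ∧ RelProjective Rᵐᵒᵖ M ↥(A i)) ∧
          (modRad Rᵐᵒᵖ M = ⨆ i, (modRad Rᵐᵒᵖ ↥(A i)).map (A i).subtype) ∧
          IsVModule Rᵐᵒᵖ (M ⧸ modRad Rᵐᵒᵖ M) ] := by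
  have h1 : IsAlmostVModule Rᵐᵒᵖ M ↔ SplitProp Rᵐᵒᵖ M := ⟨split_of_almostV, almostV_of_split⟩
  tfae_have 1 → 2 := fun h N _ _ hN => two_of_split (h1.1 h) N hN
  tfae_have 2 → 3 := fun h => three_of_split (split_of_two h)
  tfae_have 3 → 1 := fun h => h1.2 (split_of_three h)
  tfae_finish
end

section
/- Let R be a ring satisfying: (a) there exists a finite set {e_i}_{i∈I} of orthogonal idempotents of R such that each e_iR is a local injective right R-module of composition length two and J(R_R) = ⊕_{i∈I} J(e_iR); (b) R/J(R) is a right SV-ring and the Loewy length of R_R is at most 2; (c) R/SI(R_R) is a right artinian ring. Then every right R-module is a direct sum of an injective module and a V-module, and also a direct sum of a projective module and a V-module. -/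
universe u v w

/-- `SI(R_R)`: the sum of all simple injective submodules of the right regular module. -/
def SIdeal (R : Type u) [Ring R] : Submodule Rᵐᵒᵖ R :=
  sSup {T : Submodule Rᵐᵒᵖ R | IsAtom T ∧ Module.Injective Rᵐᵒᵖ ↥T}

/-- Condition (a): there is a finite set of orthogonal idempotents `eᵢ` such that each
`eᵢR` is a local injective right module of length two and `J(R_R) = ⊕ J(eᵢR)`. -/
def HypA (R : Type u) [Ring R] : Prop :=
  ∃ (n : ℕ) (e : Fin n → R),
    (∀ i, IsIdempotentElem (e i)) ∧
    (∀ i j, i ≠ j → e i * e j = 0) ∧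
    (∀ i, IsLocalModule Rᵐᵒᵖ ↥(Submodule.span Rᵐᵒᵖ ({e i} : Set R)) ∧
      Module.Injective Rᵐᵒᵖ ↥(Submodule.span Rᵐᵒᵖ ({e i} : Set R)) ∧
      HasLengthTwo Rᵐᵒᵖ ↥(Submodule.span Rᵐᵒᵖ ({e i} : Set R))) ∧
    iSupIndep (fun i => Submodule.span Rᵐᵒᵖ ({e i} : Set R)) ∧
    modRad Rᵐᵒᵖ R =
      ⨆ i, (modRad Rᵐᵒᵖ ↥(Submodule.span Rᵐᵒᵖ ({e i} : Set R))).map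
        (Submodule.span Rᵐᵒᵖ ({e i} : Set R)).subtype

/-- Condition (b): `R/J(R)` is a right `SV`-ring and the Loewy length of `R_R` is at
most `2` (i.e. `R/Soc(R_R)` is semisimple). -/
def HypB (R : Type u) [Ring R] : Prop :=
  (∃ c : RingCon R, (∀ x : R, c x 0 ↔ x ∈ modRad Rᵐᵒᵖ R) ∧
      IsSemiartinianModule (RingCon.Quotient c)ᵐᵒᵖ (RingCon.Quotient c) ∧
      IsVModule (RingCon.Quotient c)ᵐᵒᵖ (RingCon.Quotient c)) ∧
  IsSemisimpleModule Rᵐᵒᵖ (R ⧸ modSocle Rᵐᵒᵖ R)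

/-- Condition (c): `R/SI(R_R)` is a right artinian ring. -/
def HypC (R : Type u) [Ring R] : Prop :=
  ∃ c : RingCon R, (∀ x : R, c x 0 ↔ x ∈ SIdeal R) ∧
    IsArtinian (RingCon.Quotient c)ᵐᵒᵖ (RingCon.Quotient c)

section Helpers

/-- A direct sum of Baer modules is Baer when every ideal is, modulo a part killed by all maps
into the summands, finitely generated. -/
theorem baer_dfinsupp_aux {A : Type u} [Ring A] {X : Type w} [AddCommGroup X] [Module A X]
    [IsNoetherian A X] (q : A →ₗ[A] X) {ι : Type v} (N : ι → Type v)
    [∀ i, AddCommGroup (N i)] [∀ i, Module A (N i)]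
    (hN : ∀ i, Module.Baer A (N i))
    (hq : ∀ i (g : A →ₗ[A] N i), ∀ a, q a = 0 → g a = 0) :
    Module.Baer A (Π₀ i, N i) := by
  classical
  intro I f
  have hext : ∀ i, ∃ g : A →ₗ[A] N i, ∀ x (hx : x ∈ I), g x = f ⟨x, hx⟩ i := by
    intro i
    exact hN i I ((DFinsupp.lapply i).comp f)
  choose g hg using hext
  have hfg : (LinearMap.range f).FG := by
    let p : I →ₗ[A] X := q.comp I.subtype
    have hk : LinearMap.ker p ≤ LinearMap.ker f := by
      intro x hx
      rw [LinearMap.mem_ker] at hx ⊢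
      ext i
      rw [← hg i x x.2]
      exact hq i (g i) x hx
    have : IsNoetherian A (I ⧸ LinearMap.ker p) :=
      isNoetherian_of_linearEquiv (LinearMap.quotKerEquivRange p).symm
    rw [← Submodule.range_liftQ (LinearMap.ker p) f hk]
    rw [← Submodule.map_top]
    exact (IsNoetherian.noetherian ⊤).map _
  obtain ⟨t, ht⟩ := hfg
  let F : Finset ι := t.biUnion fun d => d.support
  have hF : ∀ x (hx : x ∈ I) i, i ∉ F → f ⟨x, hx⟩ i = 0 := by
    intro x hx i hi
    have h1 : Submodule.span A (t : Set (Π₀ i, N i)) ≤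
        LinearMap.ker (DFinsupp.lapply (R := A) (M := N) i) := by
      rw [Submodule.span_le]
      intro d hd
      by_contra hne
      apply hi
      rw [Finset.mem_biUnion]
      exact ⟨d, hd, by simpa using hne⟩
    rw [ht] at h1
    exact h1 ⟨⟨x, hx⟩, rfl⟩
  refine ⟨∑ i ∈ F, (DFinsupp.lsingle (R := A) (M := N) i).comp (g i), ?_⟩
  intro x hx
  ext i
  rw [LinearMap.sum_apply, DFinsupp.finsetSum_apply]
  simp only [LinearMap.comp_apply, DFinsupp.lsingle_apply, DFinsupp.single_apply]
  by_cases hi : i ∈ F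
  · rw [Finset.sum_eq_single i]
    · simp [hg i x hx]
    · intro j _ hj
      simp [hj]
    · intro h; exact absurd hi h
  · rw [hF x hx i hi]
    apply Finset.sum_eq_zero
    intro j hj
    have : j ≠ i := by rintro rfl; exact hi hj
    simp [this]

/-- The sum of an independent set of submodules is isomorphic to the direct sum. -/
theorem sSup_equiv_aux {A : Type u} [Ring A] {M : Type v} [AddCommGroup M] [Module A M]
    (s : Set (Submodule A M)) (hs : sSupIndep s) :
    Nonempty ((Π₀ i : s, (i : Submodule A M)) ≃ₗ[A] ↥(sSup s)) := by
  classical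
  rw [sSupIndep_iff] at hs
  let φ := DFinsupp.lsum ℕ (fun i : s => (i : Submodule A M).subtype)
  have h1 : Function.Injective φ := hs.dfinsupp_lsum_injective
  have h2 : LinearMap.range φ = sSup s := by
    rw [sSup_eq_iSup']
    exact (Submodule.iSup_eq_range_dfinsupp_lsum _).symm
  exact ⟨(LinearEquiv.ofInjective φ h1).trans (LinearEquiv.ofEq _ _ h2)⟩

/-- Existence of a maximal independent set of submodules with a given property. -/
theorem exists_max_indep_aux {A : Type u} [Ring A] {M : Type v} [AddCommGroup M] [Module A M]
    (p : Submodule A M → Prop) :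
    ∃ s : Set (Submodule A M), sSupIndep s ∧ (∀ N ∈ s, p N) ∧
      ∀ N, p N → Disjoint N (sSup s) → N = ⊥ := by
  have zorn := zorn_subset
    (S := {s : Set (Submodule A M) | sSupIndep s ∧ ∀ a ∈ s, p a})
    fun c hc1 hc2 =>
      ⟨⋃₀ c,
        ⟨iSupIndep_sUnion_of_directed hc2.directedOn fun s hs => (hc1 hs).1,
          fun a ⟨s, sc, as⟩ => (hc1 sc).2 a as⟩,
        fun _ => Set.subset_sUnion_of_mem⟩
  simp_rw [maximal_subset_iff] at zorn
  obtain ⟨s, ⟨s_ind, s_p⟩, s_max⟩ := zorn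
  refine ⟨s, s_ind, s_p, fun a ha hd => ?_⟩
  have key : s = s ∪ {a} := by
    refine s_max ⟨fun x hx => ?_, fun x hx => ?_⟩ Set.subset_union_left
    · rw [Set.mem_union, Set.mem_singleton_iff] at hx
      obtain rfl | xa := eq_or_ne x a
      · simp only [Set.mem_singleton, Set.insert_sdiff_of_mem, Set.union_singleton]
        exact hd.mono_right (sSup_le_sSup Set.sdiff_subset)
      · have h : (s ∪ {a}) \ {x} = s \ {x} ∪ {a} := by
          simp only [Set.union_singleton]
          rw [Set.insert_sdiff_of_notMem]
          rw [Set.mem_singleton_iff]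
          exact Ne.symm xa
        rw [h, sSup_union, sSup_singleton]
        apply
          (s_ind (hx.resolve_right xa)).disjoint_sup_right_of_disjoint_sup_left
            (hd.mono_right _).symm
        rw [← sSup_insert, Set.insert_sdiff_singleton, Set.insert_eq_of_mem (hx.resolve_right xa)]
    · rw [Set.mem_union, Set.mem_singleton_iff] at hx
      obtain hx | rfl := hx
      · exact s_p x hx
      · exact ha
  have has : a ∈ s := by rw [key]; exact Or.inr rfl
  exact disjoint_self.mp (hd.mono_right (le_sSup has))

/-- The semilinear quotient map. -/
def quotSemi {R : Type u} [Ring R] (c : RingCon R) :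
    R →ₛₗ[(RingHom.op c.mk')] c.Quotient where
  toFun := c.mk'
  map_add' := map_add _
  map_smul' := fun a x => by
    simp

theorem quotSemi_surj {R : Type u} [Ring R] (c : RingCon R) :
    Function.Surjective (quotSemi c) := RingCon.mk'_surjective c

instance quotSemi_rhs {R : Type u} [Ring R] (c : RingCon R) :
    RingHomSurjective (RingHom.op c.mk') :=
  ⟨fun x => by
    obtain ⟨y, hy⟩ := RingCon.mk'_surjective c x.unop
    exact ⟨MulOpposite.op y, by simp [hy]⟩⟩

theorem quotSemi_eq_zero {R : Type u} [Ring R] (c : RingCon R) (x : R) :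
    quotSemi c x = 0 ↔ c x 0 := RingCon.eq c

/-- `R` is isomorphic to `Rᵐᵒᵖ` as a module over `Rᵐᵒᵖ`. -/
def opEquivAux (R : Type u) [Ring R] : R ≃ₗ[Rᵐᵒᵖ] Rᵐᵒᵖ where
  toFun := MulOpposite.op
  invFun := MulOpposite.unop
  left_inv := fun _ => rfl
  right_inv := fun _ => rfl
  map_add' := fun _ _ => rfl
  map_smul' := fun _ _ => rfl

theorem noeth_of_hypC {R : Type u} [Ring R] (hC : HypC R) :
    IsNoetherian Rᵐᵒᵖ (R ⧸ SIdeal R) := by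
  obtain ⟨c, hc, hart⟩ := hC
  have h1 : IsArtinianRing (c.Quotient)ᵐᵒᵖ :=
    isArtinian_of_linearEquiv (opEquivAux c.Quotient)
  have h2 : IsNoetherianRing (c.Quotient)ᵐᵒᵖ := inferInstance
  have h3 : IsNoetherian (c.Quotient)ᵐᵒᵖ c.Quotient :=
    isNoetherian_of_linearEquiv (opEquivAux c.Quotient).symm
  have hker : SIdeal R = LinearMap.ker (quotSemi c) := by
    ext x
    rw [LinearMap.mem_ker, quotSemi_eq_zero, hc]
  let φ := (SIdeal R).liftQ (quotSemi c) hker.le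
  have hb : Function.Bijective φ := by
    constructor
    · rw [← LinearMap.ker_eq_bot]
      exact Submodule.ker_liftQ_eq_bot _ _ _ hker.ge
    · intro y
      obtain ⟨x, hx⟩ := quotSemi_surj c y
      exact ⟨(SIdeal R).mkQ x, by simpa [φ] using hx⟩
  exact (φ.isNoetherian_iff_of_bijective hb).mpr h3

theorem max_of_hypB {R : Type u} [Ring R] (hB : HypB R) (Q : Submodule Rᵐᵒᵖ R)
    (hQ : modRad Rᵐᵒᵖ R ≤ Q) (r : R) (hr : r ∉ Q) :
    ∃ W : Submodule Rᵐᵒᵖ R, IsCoatom W ∧ Q ≤ W ∧ r ∉ W := by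
  obtain ⟨⟨c, hc, -, hV⟩, -⟩ := hB
  have hker : LinearMap.ker (quotSemi c) ≤ Q := by
    intro x hx
    rw [LinearMap.mem_ker, quotSemi_eq_zero, hc] at hx
    exact hQ hx
  have hcm : (Q.map (quotSemi c)).comap (quotSemi c) = Q := Submodule.comap_map_eq_self hker
  have hr' : quotSemi c r ∉ Q.map (quotSemi c) := by
    rw [← Submodule.mem_comap, hcm]; exact hr
  obtain ⟨S, hS, hQS⟩ := hV (Q.map (quotSemi c)) (by
    intro h; rw [h] at hr'; exact hr' trivial)
  rw [hQS, Submodule.mem_sInf] at hr'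
  push Not at hr'
  obtain ⟨P, hP, hrP⟩ := hr'
  refine ⟨P.comap (quotSemi c), (Submodule.isCoatom_comap_iff (quotSemi_surj c)).mpr (hS P hP), ?_,
    hrP⟩
  rw [← Submodule.map_le_iff_le_comap, hQS]
  exact sInf_le hP

/-- The orbit map `r ↦ m r`. -/
def orbitMap {R : Type u} [Ring R] {M : Type v} [AddCommGroup M] [Module Rᵐᵒᵖ M] (m : M) :
    R →ₗ[Rᵐᵒᵖ] M where
  toFun := fun r => MulOpposite.op r • m
  map_add' := fun x y => by rw [MulOpposite.op_add, add_smul]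
  map_smul' := fun a x => by
    simp [mul_smul]

theorem vmodule_of_ann {R : Type u} [Ring R] (hB : HypB R) (L : Type v) [AddCommGroup L]
    [Module Rᵐᵒᵖ L] (hL : ∀ (m : L), ∀ x ∈ modRad Rᵐᵒᵖ R, orbitMap m x = 0) :
    IsVModule Rᵐᵒᵖ L := by
  intro N _
  refine ⟨{P | IsCoatom P ∧ N ≤ P}, fun P hP => hP.1, le_antisymm (le_sInf fun P hP => hP.2) ?_⟩
  intro x hx
  by_contra hxN
  -- a maximal submodule above `N` avoiding `x`
  obtain ⟨P, hNP, hPmax⟩ := zorn_le_nonempty₀ {P : Submodule Rᵐᵒᵖ L | x ∉ P} (by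
    intro c hc hchain y hy
    refine ⟨sSup c, ?_, fun z hz => le_sSup hz⟩
    intro hxs
    rw [Submodule.mem_sSup_of_directed ⟨y, hy⟩ hchain.directedOn] at hxs
    obtain ⟨z, hz, hxz⟩ := hxs
    exact hc hz hxz) N hxN
  have hxP : x ∉ P := hPmax.prop
  have hmax : ∀ P', P < P' → x ∈ P' := by
    intro P' h
    by_contra h'
    exact absurd (hPmax.le_of_ge h' h.le) (not_le_of_gt h)
  have hgen : ∀ y, y ∉ P → ∃ r : R, orbitMap y r - x ∈ P := by
    intro y hy
    have h1 : P < P ⊔ Submodule.span Rᵐᵒᵖ {y} := by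
      refine lt_of_le_of_ne le_sup_left fun h => hy ?_
      rw [h]
      exact (le_sup_right : _ ≤ P ⊔ _) (Submodule.mem_span_singleton_self y)
    have h2 := hmax _ h1
    rw [Submodule.mem_sup] at h2
    obtain ⟨p, hp, z, hz, hpz⟩ := h2
    rw [Submodule.mem_span_singleton] at hz
    obtain ⟨a, rfl⟩ := hz
    refine ⟨a.unop, ?_⟩
    have : orbitMap y a.unop - x = -p := by
      rw [← hpz]; simp [orbitMap]
    rw [this]
    exact P.neg_mem hp
  have hco : IsCoatom P := by
    refine ⟨fun h => hxP (h ▸ trivial), fun P' hP' => ?_⟩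
    have hxP' := hmax P' hP'
    rw [eq_top_iff]
    rintro y -
    by_cases hy : y ∈ P
    · exact hP'.le hy
    obtain ⟨r, hr⟩ := hgen y hy
    let Q := P.comap (orbitMap y)
    have hrQ : r ∉ Q := by
      intro h
      apply hxP
      have := P.sub_mem (show orbitMap y r ∈ P from h) hr
      simpa using this
    obtain ⟨W, hW, hQW, hrW⟩ := max_of_hypB hB Q (by
      intro z hz
      show orbitMap y z ∈ P
      rw [hL y z hz]; exact P.zero_mem) r hrQ
    have htop : W ⊔ Submodule.span Rᵐᵒᵖ {r} = ⊤ := by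
      apply hW.2
      refine lt_of_le_of_ne le_sup_left fun h => hrW ?_
      rw [h]
      exact (le_sup_right : _ ≤ W ⊔ _) (Submodule.mem_span_singleton_self r)
    have h1 : (1 : R) ∈ W ⊔ Submodule.span Rᵐᵒᵖ {r} := by rw [htop]; trivial
    rw [Submodule.mem_sup] at h1
    obtain ⟨w, hw, z, hz, hwz⟩ := h1
    rw [Submodule.mem_span_singleton] at hz
    obtain ⟨b, rfl⟩ := hz
    have hyr : orbitMap y r ∈ P' := by
      have := P'.add_mem (hP'.le hr) hxP'
      simpa using this
    have hyw : orbitMap y w ∈ P := by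
      by_contra hyw
      obtain ⟨d, hd⟩ := hgen _ hyw
      apply hrW
      have h3 : w * d - r ∈ Q := by
        show orbitMap y (w * d - r) ∈ P
        have : orbitMap y (w * d - r) =
            (orbitMap (orbitMap y w) d - x) - (orbitMap y r - x) := by
          rw [map_sub]
          simp [orbitMap, mul_smul]
        rw [this]
        exact P.sub_mem hd hr
      have h4 : w * d ∈ W := W.smul_mem (MulOpposite.op d) hw
      have := W.sub_mem h4 (hQW h3)
      simpa using this
    have h5 : y = orbitMap y (w + b • r) := by
      rw [hwz]; simp [orbitMap]
    rw [h5, map_add, map_smul]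
    exact P'.add_mem (hP'.le hyw) (P'.smul_mem b hyr)
  exact hxP (Submodule.mem_sInf.mp hx P ⟨hco, hNP⟩)

/-- A local module of length two has a unique nontrivial submodule. -/
theorem local_two_aux {A : Type u} [Ring A] {E : Type w} [AddCommGroup E] [Module A E]
    (h1 : IsLocalModule A E) (h2 : HasLengthTwo A E) :
    ∃ S : Submodule A E, IsAtom S ∧ IsCoatom S ∧ ∀ K : Submodule A E, K = ⊥ ∨ K = S ∨ K = ⊤ := by
  obtain ⟨P, hP, hPm⟩ := h1
  obtain ⟨S, hS, hS'⟩ := h2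
  have hPS : P = S := by
    rcases hS'.le_iff.mp (hPm S hS'.1) with h | h
    · exact absurd h hP
    · exact h
  refine ⟨S, hS, hS', fun K => ?_⟩
  by_cases hK : K = ⊤
  · exact Or.inr (Or.inr hK)
  · have := hPm K hK
    rw [hPS] at this
    rcases hS.le_iff.mp this with h | h
    · exact Or.inl h
    · exact Or.inr (Or.inl h)

/-- A submodule that is a Baer module is a direct summand. -/
theorem baer_summand {A : Type u} [Ring A] {M : Type w} [AddCommGroup M] [Module A M]
    (K : Submodule A M) (hK : Module.Baer A K) : ∃ L, IsCompl K L := by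
  obtain ⟨f, hf⟩ := hK.extension_property K.subtype K.injective_subtype LinearMap.id
  exact ⟨LinearMap.ker f, LinearMap.isCompl_of_proj fun x => DFunLike.congr_fun hf x⟩

/-- Maps to a local module of length two kill simple injectives. -/
theorem kill_aux {A : Type u} [Ring A] {E : Type w} [AddCommGroup E] [Module A E]
    (h1 : IsLocalModule A E) (h2 : HasLengthTwo A E)
    {T : Type v} [AddCommGroup T] [Module A T] [IsSimpleModule A T] (hT : Module.Baer A T)
    (f : T →ₗ[A] E) : f = 0 := by
  rcases LinearMap.injective_or_eq_zero f with hf | hf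
  swap
  · exact hf
  exfalso
  obtain ⟨S, hS, hS', hall⟩ := local_two_aux h1 h2
  let e := LinearEquiv.ofInjective f hf
  have hb : Module.Baer A (LinearMap.range f) := hT.of_equiv e
  have hsim : IsSimpleModule A (LinearMap.range f) := IsSimpleModule.congr e.symm
  have hat : IsAtom (LinearMap.range f) := isSimpleModule_iff_isAtom.mp hsim
  obtain ⟨L, hL⟩ := baer_summand _ hb
  have hSne : S ≠ ⊥ := hS.1
  have hr : LinearMap.range f = S := by
    rcases hall (LinearMap.range f) with h | h | h
    · exact absurd h hat.1
    · exact h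
    · rw [h] at hat
      rcases hat.le_iff.mp (le_top : S ≤ ⊤) with h | h
      · exact absurd h hS.1
      · exact absurd h hS'.1
  rw [hr] at hL
  rcases hall L with h | h | h
  · subst h; exact hS'.1 (by simpa using hL.sup_eq_top)
  · subst h; exact hS.1 (by simpa using hL.inf_eq_bot)
  · subst h; exact hS.1 (by simpa using hL.inf_eq_bot)

end Helpers

/-- Lemma 3.1 (2), (3): under conditions (a), (b), (c) every right `R`-module is a direct
sum of an injective module and a `V`-module, and also a direct sum of a projective module
and a `V`-module. -/
theorem lemma31_decompositions (R : Type u) [Ring R]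
    (hA : HypA R) (hB : HypB R) (hC : HypC R) :
    ∀ (M : Type v) [AddCommGroup M] [Module Rᵐᵒᵖ M],
      (∃ K L : Submodule Rᵐᵒᵖ M, IsCompl K L ∧ Module.Injective Rᵐᵒᵖ ↥K ∧
        IsVModule Rᵐᵒᵖ ↥L) ∧
      (∃ K L : Submodule Rᵐᵒᵖ M, IsCompl K L ∧ Module.Projective Rᵐᵒᵖ ↥K ∧
        IsVModule Rᵐᵒᵖ ↥L) := by
  intro M _ _
  have hNoeth := noeth_of_hypC hC
  obtain ⟨n, e, hid, -, hE, -, hJ⟩ := hA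
  have hEB : ∀ i, Module.Baer Rᵐᵒᵖ ↥(Submodule.span Rᵐᵒᵖ ({e i} : Set R)) :=
    fun i => Module.Baer.of_injective (hE i).2.1
  -- maps into the `eᵢR` kill `SI`
  have hkill : ∀ i (g : R →ₗ[Rᵐᵒᵖ] ↥(Submodule.span Rᵐᵒᵖ ({e i} : Set R))),
      SIdeal R ≤ LinearMap.ker g := by
    intro i g
    refine sSup_le ?_
    rintro T ⟨hT, hTi⟩
    have : IsSimpleModule Rᵐᵒᵖ T := isSimpleModule_iff_isAtom.mpr hT
    have h0 := kill_aux (hE i).1 (hE i).2.2 (Module.Baer.of_injective hTi) (g.comp T.subtype)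
    intro x hx
    exact DFunLike.congr_fun h0 ⟨x, hx⟩
  have hEP : ∀ i, Module.Projective Rᵐᵒᵖ ↥(Submodule.span Rᵐᵒᵖ ({e i} : Set R)) := by
    intro i
    have hR : Module.Projective Rᵐᵒᵖ R := Module.Projective.of_equiv (opEquivAux R).symm
    have hmem : ∀ r : R, e i * r ∈ Submodule.span Rᵐᵒᵖ ({e i} : Set R) := fun r =>
      Submodule.smul_mem _ (MulOpposite.op r) (Submodule.mem_span_singleton_self _)
    let s : R →ₗ[Rᵐᵒᵖ] ↥(Submodule.span Rᵐᵒᵖ ({e i} : Set R)) :=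
      { toFun := fun r => ⟨e i * r, hmem r⟩
        map_add' := fun x y => Subtype.ext (mul_add _ _ _)
        map_smul' := fun a x => Subtype.ext (by simp [mul_assoc]) }
    refine Module.Projective.of_split (Submodule.subtype _) s ?_
    ext ⟨x, hx⟩
    rw [Submodule.mem_span_singleton] at hx
    obtain ⟨a, rfl⟩ := hx
    simp only [LinearMap.comp_apply, Submodule.subtype_apply, LinearMap.id_apply]
    change e i * (e i * a.unop) = e i * a.unop
    rw [← mul_assoc, (hid i).eq]
  obtain ⟨s, hs, hsp, hsmax⟩ := exists_max_indep_aux (A := Rᵐᵒᵖ) (M := M)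
    (fun N => ∃ i, Nonempty (↥(Submodule.span Rᵐᵒᵖ ({e i} : Set R)) ≃ₗ[Rᵐᵒᵖ] N))
  obtain ⟨Φ⟩ := sSup_equiv_aux s hs
  have hKB : Module.Baer Rᵐᵒᵖ ↥(sSup s) := by
    refine Module.Baer.of_equiv Φ ?_
    refine baer_dfinsupp_aux ((SIdeal R).mkQ.comp (opEquivAux R).symm.toLinearMap) _ ?_ ?_
    · rintro ⟨N, hN⟩
      obtain ⟨i, ⟨ψ⟩⟩ := hsp N hN
      exact (hEB i).of_equiv ψ
    · rintro ⟨N, hN⟩ g a ha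
      obtain ⟨i, ⟨ψ⟩⟩ := hsp N hN
      have h1 : (opEquivAux R).symm a ∈ SIdeal R := by
        rw [← Submodule.Quotient.mk_eq_zero]; exact ha
      have h2 := hkill i ((ψ.symm.toLinearMap.comp g).comp (opEquivAux R).toLinearMap) h1
      rw [LinearMap.mem_ker] at h2
      simpa using h2
  have hKP : Module.Projective Rᵐᵒᵖ ↥(sSup s) := by
    have : ∀ N : s, Module.Projective Rᵐᵒᵖ (N : Submodule Rᵐᵒᵖ M) := by
      rintro ⟨N, hN⟩
      obtain ⟨i, ⟨ψ⟩⟩ := hsp N hN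
      have := hEP i
      exact Module.Projective.of_equiv ψ
    exact Module.Projective.of_equiv Φ
  obtain ⟨L, hL⟩ := baer_summand _ hKB
  have hV : IsVModule Rᵐᵒᵖ ↥L := by
    refine vmodule_of_ann hB _ ?_
    intro m x hx
    rw [hJ] at hx
    revert x
    change _ ≤ LinearMap.ker (orbitMap m)
    refine iSup_le fun i => ?_
    rintro _ ⟨z, hz, rfl⟩
    by_contra hne
    obtain ⟨S, hS, hS', hall⟩ := local_two_aux (hE i).1 (hE i).2.2
    have hzS : z ∈ S := Submodule.mem_sInf.mp hz S hS'
    let φ : ↥(Submodule.span Rᵐᵒᵖ ({e i} : Set R)) →ₗ[Rᵐᵒᵖ] M :=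
      L.subtype.comp ((orbitMap m).comp (Submodule.subtype _))
    have hφz : φ z ≠ 0 := by
      intro h
      apply hne
      exact Subtype.ext h
    have hφ : LinearMap.ker φ = ⊥ := by
      rcases hall (LinearMap.ker φ) with h | h | h
      · exact h
      · exact absurd (show z ∈ LinearMap.ker φ from h ▸ hzS) hφz
      · exact absurd (show z ∈ LinearMap.ker φ from h ▸ trivial) hφz
    have hr := hsmax (LinearMap.range φ)
      ⟨i, ⟨LinearEquiv.ofInjective φ (LinearMap.ker_eq_bot.mp hφ)⟩⟩
      (hL.disjoint.symm.mono_left (by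
        rintro _ ⟨y, rfl⟩
        exact Subtype.property _))
    apply hφz
    have : φ z ∈ LinearMap.range φ := ⟨z, rfl⟩
    rw [hr] at this
    exact (Submodule.mem_bot _).mp this
  exact ⟨⟨sSup s, L, hL, hKB.injective, hV⟩, ⟨sSup s, L, hL, hKP, hV⟩⟩
end

section
/- Let R be a ring satisfying: (a) there exists a finite set {e_i}_{i∈I} of orthogonal idempotents of R such that each e_iR is a local injective right R-module of composition length two and J(R_R) = ⊕_{i∈I} J(e_iR); (b) R/J(R) is a right SV-ring and the Loewy length of R_R is at most 2; (c) R/SI(R_R) is a right artinian ring. If S is a simple submodule of a right R-module N with S ⊆ J(N) and S ∩ N' = 0 for some submodule N' of N, then there exist submodules L and N'' of N such that L is a local module of composition length two, S ⊆ L, N' ⊆ N'', and N = N'' ⊕ L. -/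
universe u v w

section Helpers

/-- Right multiplication map `r ↦ x r`. -/
def actMap (R : Type u) [Ring R] {N : Type v} [AddCommGroup N] [Module Rᵐᵒᵖ N] (x : N) :
    R →ₗ[Rᵐᵒᵖ] N where
  toFun r := MulOpposite.op r • x
  map_add' a b := by rw [MulOpposite.op_add, add_smul]
  map_smul' a b := by
    rw [MulOpposite.smul_eq_mul_unop, MulOpposite.op_mul, MulOpposite.op_unop, mul_smul]
    rfl

theorem actMap_apply (R : Type u) [Ring R] {N : Type v} [AddCommGroup N] [Module Rᵐᵒᵖ N]
    (x : N) (r : R) : actMap R x r = MulOpposite.op r • x := rfl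

/-- The `V`-property lifted from `R/J`. -/
theorem exists_coatom_of_V (R : Type u) [Ring R] (J : Submodule Rᵐᵒᵖ R) (c : RingCon R)
    (hc : ∀ x : R, c x 0 ↔ x ∈ J)
    (hV : IsVModule (RingCon.Quotient c)ᵐᵒᵖ (RingCon.Quotient c))
    (I : Submodule Rᵐᵒᵖ R) (hJI : J ≤ I) (r : R) (hr : r ∉ I) :
    ∃ M : Submodule Rᵐᵒᵖ R, IsCoatom M ∧ I ≤ M ∧ r ∉ M := by
  have key : ∀ a b : R, (a : c.Quotient) = b → a - b ∈ J := by
    intro a b h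
    have h1 : c a b := (RingCon.eq c).1 h
    have h2 := c.sub h1 (c.refl b)
    rw [sub_self] at h2
    exact (hc _).1 h2
  let im : Submodule Rᵐᵒᵖ R → Submodule (RingCon.Quotient c)ᵐᵒᵖ (RingCon.Quotient c) := fun B =>
    { carrier := {q | ∃ a ∈ B, (a : c.Quotient) = q}
      zero_mem' := ⟨0, B.zero_mem, rfl⟩
      add_mem' := by
        rintro _ _ ⟨a, ha, rfl⟩ ⟨b, hb, rfl⟩
        exact ⟨a + b, B.add_mem ha hb, rfl⟩
      smul_mem' := by
        rintro q _ ⟨a, ha, rfl⟩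
        induction q using MulOpposite.rec' with
        | h q =>
        induction q using Quotient.inductionOn with
        | h q => exact ⟨a * q, B.smul_mem (MulOpposite.op q) ha, rfl⟩ }
  have mem_im : ∀ (B : Submodule Rᵐᵒᵖ R), J ≤ B → ∀ a : R, (a : c.Quotient) ∈ im B → a ∈ B := by
    rintro B hB a ⟨b, hb, hab⟩
    have := B.sub_mem hb (hB (key b a hab))
    simpa using this
  have hrI : (r : c.Quotient) ∉ im I := fun h => hr (mem_im I hJI r h)
  obtain ⟨S, hS, hIS⟩ := hV (im I) (fun h => hrI (h ▸ Submodule.mem_top))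
  rw [hIS, Submodule.mem_sInf] at hrI
  push Not at hrI
  obtain ⟨P, hP, hrP⟩ := hrI
  have hIP : im I ≤ P := hIS ▸ sInf_le hP
  let M : Submodule Rᵐᵒᵖ R :=
    { carrier := {a | (a : c.Quotient) ∈ P}
      zero_mem' := P.zero_mem
      add_mem' := fun {a b} ha hb => P.add_mem ha hb
      smul_mem' := fun q a ha => P.smul_mem (MulOpposite.op ((q.unop : R) : c.Quotient)) ha }
  have hIM : I ≤ M := fun a ha => hIP ⟨a, ha, rfl⟩
  refine ⟨M, ⟨fun h => ?_, fun B hB => ?_⟩, hIM, hrP⟩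
  · exact hrP (show r ∈ M from h ▸ Submodule.mem_top)
  · have hJB : J ≤ B := (hJI.trans hIM).trans hB.le
    obtain ⟨b, hbB, hbM⟩ := SetLike.exists_of_lt hB
    have hlt : P < im B := by
      refine lt_of_le_of_ne (fun q hq => ?_) (fun h => hbM ?_)
      · induction q using Quotient.inductionOn with
        | h q => exact ⟨q, hB.le (show q ∈ M from hq), rfl⟩
      · change (b : c.Quotient) ∈ P
        rw [h]
        exact ⟨b, hbB, rfl⟩
    have htop := (hS P hP).2 _ hlt
    rw [eq_top_iff]
    intro a _
    exact mem_im B hJB a (htop ▸ Submodule.mem_top)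

/-- A submodule containing `N J` contains the radical. -/
theorem modRad_le_of_V (R : Type u) [Ring R] (J : Submodule Rᵐᵒᵖ R)
    (hV : ∀ I : Submodule Rᵐᵒᵖ R, J ≤ I → ∀ r ∉ I,
      ∃ M : Submodule Rᵐᵒᵖ R, IsCoatom M ∧ I ≤ M ∧ r ∉ M)
    (N : Type v) [AddCommGroup N] [Module Rᵐᵒᵖ N] (A : Submodule Rᵐᵒᵖ N)
    (hA : ∀ y : N, J ≤ A.comap (actMap R y)) : modRad Rᵐᵒᵖ N ≤ A := by
  intro x hx
  by_contra hxA
  obtain ⟨W, hAW, hW⟩ := zorn_le_nonempty₀ {W : Submodule Rᵐᵒᵖ N | x ∉ W} (by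
    intro s hs hch y hy
    refine ⟨sSup s, ?_, fun z hz => le_sSup hz⟩
    intro hmem
    rw [Submodule.mem_sSup_of_directed ⟨y, hy⟩ hch.directedOn] at hmem
    obtain ⟨z, hz, hxz⟩ := hmem
    exact hs hz hxz) A hxA
  have hxW : x ∉ W := hW.prop
  have hmax : ∀ B : Submodule Rᵐᵒᵖ N, W ≤ B → x ∉ B → B ≤ W := fun B h1 h2 => hW.le_of_ge h2 h1
  -- for every y outside W, y lies in xR + W
  have main : ∀ y ∉ W, y ∈ W ⊔ LinearMap.range (actMap R x) := by
    intro y hy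
    have self_mem : ∀ z : N, z ∈ LinearMap.range (actMap R z) := fun z =>
      ⟨1, by rw [actMap_apply]; simp⟩
    have hx1 : x ∈ W ⊔ LinearMap.range (actMap R y) := by
      by_contra h
      exact hy (hmax _ le_sup_left h (le_sup_right (a := W) (self_mem y)))
    obtain ⟨w, hw, _, ⟨r, rfl⟩, hwr⟩ := Submodule.mem_sup.1 hx1
    have hrI : r ∉ W.comap (actMap R y) := by
      intro h
      exact hxW (hwr ▸ W.add_mem hw h)
    obtain ⟨M, hM, hIM, hrM⟩ := hV _ ((hA y).trans (Submodule.comap_mono hAW)) r hrI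
    have hMI : M ≤ W.comap (actMap R y) := by
      rw [← Submodule.map_le_iff_le_comap]
      refine le_sup_right.trans (hmax (W ⊔ M.map (actMap R y)) le_sup_left ?_)
      intro h
      obtain ⟨w', hw', _, ⟨m, hm, rfl⟩, hwm⟩ := Submodule.mem_sup.1 h
      apply hrM
      have : r - m ∈ W.comap (actMap R y) := by
        rw [Submodule.mem_comap, map_sub]
        have : actMap R y r - actMap R y m = w' - w := by
          rw [sub_eq_sub_iff_add_eq_add, add_comm _ w, hwr, ← hwm]
        rw [this]
        exact W.sub_mem hw' hw
      simpa using M.add_mem (hIM this) hm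
    -- 1 ∈ M + rR
    have htop : M ⊔ Submodule.span Rᵐᵒᵖ {r} = ⊤ := by
      apply hM.2
      refine lt_of_le_of_ne le_sup_left (fun h => hrM ?_)
      rw [h]
      exact Submodule.mem_sup_right (Submodule.mem_span_singleton_self r)
    have h1 : (1 : R) ∈ M ⊔ Submodule.span Rᵐᵒᵖ {r} := htop ▸ Submodule.mem_top
    obtain ⟨m, hm, z, hz, hmz⟩ := Submodule.mem_sup.1 h1
    obtain ⟨t, rfl⟩ := Submodule.mem_span_singleton.1 hz
    have hy2 : y = actMap R y m + t • actMap R y r := by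
      rw [← map_smul, ← map_add, hmz, actMap_apply]; simp
    rw [hy2]
    refine Submodule.add_mem _ (Submodule.mem_sup_left (hMI hm)) (Submodule.smul_mem _ _ ?_)
    have : actMap R y r = x - w := by rw [← hwr]; abel
    rw [this]
    exact Submodule.sub_mem _ (Submodule.mem_sup_right (self_mem x)) (Submodule.mem_sup_left hw)
  have hco : IsCoatom W := by
    refine ⟨fun h => hxW (h ▸ Submodule.mem_top), fun B hB => ?_⟩
    have hxB : x ∈ B := by
      by_contra h
      exact absurd (hmax B hB.le h) hB.not_ge
    rw [eq_top_iff]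
    intro y _
    by_cases hy : y ∈ W
    · exact hB.le hy
    · refine (sup_le hB.le ?_ : W ⊔ LinearMap.range (actMap R x) ≤ B) (main y hy)
      rintro _ ⟨r, rfl⟩
      exact B.smul_mem _ hxB
  exact hxW ((sInf_le hco : modRad Rᵐᵒᵖ N ≤ W) hx)

/-- Extension of maps from `D` to `N` landing in a finite sum of simple modules. -/
theorem ext_finset {A : Type u} [Ring A] {E : Type w} [AddCommGroup E] [Module A E]
    (D : Submodule A E) {N : Type v} [AddCommGroup N] [Module A N]
    {ι : Type*} (T : ι → Submodule A N) (hT : ∀ a, T a = ⊥ ∨ IsAtom (T a))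
    (hext : ∀ a, ∀ α : D →ₗ[A] N, LinearMap.range α ≤ T a →
      ∃ h : E →ₗ[A] N, h ∘ₗ D.subtype = α) (s : Finset ι) :
    ∀ α : D →ₗ[A] N, LinearMap.range α ≤ (⨆ a ∈ s, T a) →
      ∃ h : E →ₗ[A] N, h ∘ₗ D.subtype = α := by
  classical
  induction s using Finset.induction_on with
  | empty =>
    intro α hα
    refine ⟨0, ?_⟩
    have : LinearMap.range α = ⊥ := by simpa using hα
    rw [LinearMap.range_eq_bot.1 this, LinearMap.zero_comp]
  | insert a s _ ih =>
    intro α hα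
    rw [Finset.iSup_insert] at hα
    set B := ⨆ a ∈ s, T a with hB
    by_cases hle : T a ≤ B
    · exact ih α (by rwa [sup_eq_right.2 hle] at hα)
    have hdis : Disjoint (T a) B := by
      rcases hT a with h | h
      · rw [h]; exact disjoint_bot_left
      · exact (IsAtom.not_le_iff_disjoint h).1 hle
    let f : (T a × B) →ₗ[A] N := (T a).subtype.coprod B.subtype
    have hf : Function.Injective f := by
      rw [← LinearMap.ker_eq_bot, LinearMap.ker_coprod_of_disjoint_range]
      · simp
      · simpa using hdis
    have hr : LinearMap.range f = T a ⊔ B := by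
      rw [LinearMap.range_coprod]; simp
    let e := LinearEquiv.ofInjective f hf
    let α' : D →ₗ[A] LinearMap.range f := α.codRestrict _ (fun d => hr ▸ hα ⟨d, rfl⟩)
    let β : D →ₗ[A] (T a × B) := e.symm.toLinearMap ∘ₗ α'
    have hβ : f ∘ₗ β = α := by
      ext d
      have : e (β d) = α' d := by simp [β]
      exact congrArg Subtype.val this
    obtain ⟨h1, hh1⟩ := hext a ((T a).subtype ∘ₗ LinearMap.fst A _ _ ∘ₗ β) (by
      rintro _ ⟨d, rfl⟩; exact (β d).1.2)
    obtain ⟨h2, hh2⟩ := ih (B.subtype ∘ₗ LinearMap.snd A _ _ ∘ₗ β) (by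
      rintro _ ⟨d, rfl⟩; exact (β d).2.2)
    refine ⟨h1 + h2, ?_⟩
    rw [LinearMap.add_comp, hh1, hh2, ← hβ]
    ext d
    simp [f]

theorem rad_props {A : Type u} [Ring A] {E : Type w} [AddCommGroup E] [Module A E]
    (hl : IsLocalModule A E) (h2 : HasLengthTwo A E) :
    IsAtom (modRad A E) ∧ ∀ K : Submodule A E, K ≠ ⊤ → K ≤ modRad A E := by
  obtain ⟨P, hP, hPK⟩ := hl
  obtain ⟨S, hSa, hSc⟩ := h2
  have hSP : S = P := by
    rcases (hPK S hSc.1).lt_or_eq with h | h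
    · exact absurd (hSc.2 _ h) hP
    · exact h
  have : modRad A E = S := by
    apply le_antisymm (sInf_le (show S ∈ {P : Submodule A E | IsCoatom P} from hSc))
    refine le_sInf (fun Q hQ => ?_)
    have h1 : Q ≤ S := hSP ▸ hPK Q hQ.1
    rcases h1.lt_or_eq with h | h
    · exact absurd (hQ.2 _ h) hSc.1
    · exact h.ge
  rw [this]
  exact ⟨hSa, fun K hK => hSP ▸ hPK K hK⟩

theorem eq_bot_of_inf_rad {A : Type u} [Ring A] {E : Type w} [AddCommGroup E] [Module A E]
    (hl : IsLocalModule A E) (h2 : HasLengthTwo A E) (K : Submodule A E)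
    (hK : K ⊓ modRad A E = ⊥) : K = ⊥ := by
  obtain ⟨h1, h3⟩ := rad_props hl h2
  by_cases h : K = ⊤
  · rw [h, top_inf_eq] at hK
    exact absurd hK h1.1
  · rwa [inf_eq_left.2 (h3 K h)] at hK

theorem local_transfer {A : Type u} [Ring A] {E : Type w} [AddCommGroup E] [Module A E]
    {F : Type v} [AddCommGroup F] [Module A F] (e : E ≃ₗ[A] F)
    (hl : IsLocalModule A E) : IsLocalModule A F := by
  obtain ⟨P, hP, hPK⟩ := hl
  let o := Submodule.orderIsoMapComap e
  refine ⟨o P, fun h => hP ((map_eq_top_iff (f := o)).1 h), fun K hK => ?_⟩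
  rw [← o.symm_apply_le]
  exact hPK _ (fun h => hK ((map_eq_top_iff (f := o.symm)).1 h))

theorem two_transfer {A : Type u} [Ring A] {E : Type w} [AddCommGroup E] [Module A E]
    {F : Type v} [AddCommGroup F] [Module A F] (e : E ≃ₗ[A] F)
    (hl : HasLengthTwo A E) : HasLengthTwo A F := by
  obtain ⟨P, hP, hPK⟩ := hl
  let o := Submodule.orderIsoMapComap e
  exact ⟨o P, (o.isAtom_iff P).2 hP, (o.isCoatom_iff P).2 hPK⟩

theorem core_splitting {A : Type u} [Ring A] {ι κ : Type*} (p : κ → ι)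
    (E : ι → Type u) [∀ i, AddCommGroup (E i)] [∀ i, Module A (E i)]
    (hE : ∀ i, IsLocalModule A (E i) ∧ Module.Injective A (E i) ∧ HasLengthTwo A (E i))
    (N : Type v) [AddCommGroup N] [Module A N] (b : ∀ a : κ, E (p a) →ₗ[A] N)
    (S N' : Submodule A N) (hS : IsSimpleModule A ↥S)
    (hSle' : S ≤ ⨆ a, (modRad A (E (p a))).map (b a)) (hSN' : S ⊓ N' = ⊥) :
    ∃ L N'' : Submodule A N,
      IsLocalModule A ↥L ∧ HasLengthTwo A ↥L ∧ S ≤ L ∧ N' ≤ N'' ∧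
        IsCompl N'' L := by
  let D : ∀ i, Submodule A (E i) := fun i => modRad A (E i)
  let T : κ → Submodule A N := fun a => (D (p a)).map (b a)
  have hD : ∀ i, IsAtom (D i) := fun i => (rad_props (hE i).1 (hE i).2.2).1
  have hDs : ∀ i, IsSimpleModule A (D i) := fun i => isSimpleModule_iff_isAtom.2 (hD i)
  have hbr : ∀ a, LinearMap.range (b a ∘ₗ (D (p a)).subtype) = T a := by
    intro a
    rw [LinearMap.range_comp, Submodule.range_subtype]
  have hinj : ∀ a, Function.Injective (b a ∘ₗ (D (p a)).subtype) ∨ T a = ⊥ := by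
    intro a
    rcases LinearMap.injective_or_eq_zero (b a ∘ₗ (D (p a)).subtype) with h | h
    · exact Or.inl h
    · right
      rw [← hbr, h, LinearMap.range_zero]
  have hiso : ∀ a, T a ≠ ⊥ → Nonempty (D (p a) ≃ₗ[A] T a) := by
    intro a ha
    have h := (hinj a).resolve_right ha
    exact ⟨(LinearEquiv.ofInjective _ h).trans (LinearEquiv.ofEq _ _ (hbr a))⟩
  have hTa : ∀ a, T a = ⊥ ∨ IsAtom (T a) := by
    intro a
    by_cases h : T a = ⊥
    · exact Or.inl h
    · right
      obtain ⟨f⟩ := hiso a h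
      exact isSimpleModule_iff_isAtom.1 (IsSimpleModule.congr f.symm)
  have hSle : S ≤ ⨆ a, T a := hSle'
  have hSa : IsAtom S := isSimpleModule_iff_isAtom.1 hS
  have hext : ∀ i, ∀ a, ∀ α : D i →ₗ[A] N, LinearMap.range α ≤ T a →
      ∃ h : E i →ₗ[A] N, h ∘ₗ (D i).subtype = α := by
    intro i a α hα
    rcases hinj a with h | h
    · let f := LinearEquiv.ofInjective _ h
      let θ : D i →ₗ[A] E (p a) := (D (p a)).subtype ∘ₗ f.symm.toLinearMap ∘ₗ
        α.codRestrict _ (fun d => (hbr a).symm ▸ hα ⟨d, rfl⟩)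
      have := (hE (p a)).2.1
      obtain ⟨g, hg⟩ := Module.Injective.extension_property A (E (p a)) _ _ (D i).subtype
        (Submodule.subtype_injective _) θ
      refine ⟨b a ∘ₗ g, ?_⟩
      rw [LinearMap.comp_assoc, hg]
      ext d
      have := f.apply_symm_apply ((α.codRestrict _ (fun d => (hbr a).symm ▸ hα ⟨d, rfl⟩)) d)
      exact congrArg Subtype.val this
    · refine ⟨0, ?_⟩
      rw [h, le_bot_iff] at hα
      rw [LinearMap.range_eq_bot.1 hα, LinearMap.zero_comp]
  -- S is isomorphic to some D i
  obtain ⟨i, ⟨f⟩⟩ : ∃ i, Nonempty (D i ≃ₗ[A] S) := by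
    let Z : Set (Submodule A N) := {U | ∃ a, T a = U ∧ IsAtom U}
    have : ∀ m : Z, IsSimpleModule A m := fun m =>
      isSimpleModule_iff_isAtom.2 m.2.choose_spec.2
    have hSZ : S ≤ sSup Z := by
      refine hSle.trans (iSup_le fun a => ?_)
      rcases hTa a with h | h
      · rw [h]; exact bot_le
      · exact le_sSup ⟨a, rfl, h⟩
    obtain ⟨_, ⟨a, rfl, ha⟩, ⟨f⟩⟩ := Submodule.linearEquiv_of_le_sSup S Z hSZ
    obtain ⟨f'⟩ := hiso a ha.1
    exact ⟨p a, ⟨f'.trans f.symm⟩⟩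
  -- extend
  let α : D i →ₗ[A] N := S.subtype ∘ₗ f.toLinearMap
  have hαr : LinearMap.range α = S := by
    simp only [α]
    rw [LinearMap.range_comp, LinearEquiv.range, Submodule.map_top, Submodule.range_subtype]
  have hαi : Function.Injective α := (Submodule.subtype_injective S).comp f.injective
  obtain ⟨s, hs⟩ : ∃ s : Finset (κ), S ≤ ⨆ a ∈ s, T a := by
    obtain ⟨x, hxS, hx0⟩ := S.ne_bot_iff.1 hSa.1
    obtain ⟨s, hs⟩ := Submodule.exists_finset_of_mem_iSup T (hSle hxS)
    refine ⟨s, ?_⟩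
    by_contra hn
    have := ((IsAtom.not_le_iff_disjoint hSa).1 hn).le_bot ⟨hxS, hs⟩
    exact hx0 (by simpa using this)
  obtain ⟨h, hh⟩ := ext_finset (D i) T hTa (hext i) s α (hαr.le.trans hs)
  have hhd : ∀ d : D i, h d = α d := fun d => LinearMap.congr_fun hh d
  have hEl := (hE i).1
  have hE2 := (hE i).2.2
  have hcom : N'.comap h = ⊥ := by
    apply eq_bot_of_inf_rad hEl hE2
    rw [eq_bot_iff]
    rintro d ⟨hd1, hd2⟩
    have h1 : h d = α ⟨d, hd2⟩ := hhd ⟨d, hd2⟩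
    have h2 : h d ∈ S ⊓ N' := ⟨by rw [h1]; exact (f ⟨d, hd2⟩).2, hd1⟩
    rw [hSN', Submodule.mem_bot, h1] at h2
    have h3 := hαi (h2.trans (map_zero α).symm)
    exact congrArg Subtype.val h3
  have hinj' : Function.Injective (N'.mkQ ∘ₗ h) := by
    rw [← LinearMap.ker_eq_bot, LinearMap.ker_comp, Submodule.ker_mkQ, hcom]
  have hinjh : Function.Injective h := by
    rw [LinearMap.coe_comp] at hinj'
    exact hinj'.of_comp
  have := (hE i).2.1
  obtain ⟨g, hg⟩ := Module.Injective.extension_property A (E i) _ _ (N'.mkQ ∘ₗ h)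
        hinj' LinearMap.id
  have hgh : ∀ x, g (N'.mkQ (h x)) = x := fun x => LinearMap.congr_fun hg x
  refine ⟨LinearMap.range h, LinearMap.ker (g ∘ₗ N'.mkQ),
    local_transfer (LinearEquiv.ofInjective h hinjh) hEl,
    two_transfer (LinearEquiv.ofInjective h hinjh) hE2, ?_, ?_, ?_⟩
  · rw [← hαr, ← hh]
    exact LinearMap.range_comp_le_range _ _
  · intro x hx
    rw [LinearMap.mem_ker, LinearMap.comp_apply, Submodule.mkQ_apply,
      (Submodule.Quotient.mk_eq_zero N').2 hx, map_zero]
  · constructor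
    · rw [Submodule.disjoint_def]
      rintro _ hx ⟨x, rfl⟩
      rw [LinearMap.mem_ker, LinearMap.comp_apply, hgh] at hx
      rw [hx, map_zero]
    · rw [codisjoint_iff, eq_top_iff]
      intro x _
      refine Submodule.mem_sup.2 ⟨x - h (g (N'.mkQ x)), ?_, h (g (N'.mkQ x)), ⟨_, rfl⟩, by abel⟩
      rw [LinearMap.mem_ker, LinearMap.comp_apply, map_sub, map_sub, hgh, sub_self]

end Helpers

/-- Lemma 3.1 (4): under conditions (a), (b), (c), if `S` is a simple submodule of `N`
with `S ⊆ J(N)` and `S ∩ N' = 0`, then `N = N'' ⊕ L` with `S ⊆ L`, `N' ⊆ N''` and `L`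
local of length two. -/
theorem lemma31_splitting (R : Type u) [Ring R]
    (hA : HypA R) (hB : HypB R) (hC : HypC R)
    (N : Type v) [AddCommGroup N] [Module Rᵐᵒᵖ N]
    (S N' : Submodule Rᵐᵒᵖ N) (hS : IsSimpleModule Rᵐᵒᵖ ↥S)
    (hSJ : S ≤ modRad Rᵐᵒᵖ N) (hSN' : S ⊓ N' = ⊥) :
    ∃ L N'' : Submodule Rᵐᵒᵖ N,
      IsLocalModule Rᵐᵒᵖ ↥L ∧ HasLengthTwo Rᵐᵒᵖ ↥L ∧ S ≤ L ∧ N' ≤ N'' ∧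
        IsCompl N'' L := by
  obtain ⟨n, e, -, -, hE, -, hJ⟩ := hA
  obtain ⟨⟨c, hc, -, hV⟩, -⟩ := hB
  have hV' := exists_coatom_of_V R (modRad Rᵐᵒᵖ R) c hc hV
  let E : Fin n → Submodule Rᵐᵒᵖ R := fun i => Submodule.span Rᵐᵒᵖ ({e i} : Set R)
  let b : ∀ a : N × Fin n, E a.2 →ₗ[Rᵐᵒᵖ] N := fun a => actMap R a.1 ∘ₗ (E a.2).subtype
  let T : N × Fin n → Submodule Rᵐᵒᵖ N := fun a => (modRad Rᵐᵒᵖ (E a.2)).map (b a)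
  have hrad : modRad Rᵐᵒᵖ N ≤ ⨆ a, T a := by
    apply modRad_le_of_V R _ hV'
    intro y
    rw [hJ]
    refine iSup_le (fun i => ?_)
    rw [← Submodule.map_le_iff_le_comap, ← Submodule.map_comp]
    exact le_iSup T (y, i)
  exact core_splitting (fun a : N × Fin n => a.2) (fun i => E i) hE N b S N' hS
    (hSJ.trans hrad) hSN'
end
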